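/- Fix γ ∈ (0,1/2), a real α with 1/(n−Δ) < α < 1/(n−1), ε > 0, and φ as described, and set N = 2^{n−1}. Then there exist C > 0 and q₀ such that for every rational t = u/q in reduced form with gcd(u,q) = 1, q ≥ q₀ and 0 < t ≤ 1, and for every real x, one has |U(t,x) − U*(t,x)| ≤ C·t^{αn/N}·q^{1/N + ε}. -/

import Mathlib

open Filter Finset MeasureTheory

/-- `e(ξ) = exp(2πiξ)`. -/
noncomputable def ee (ξ : ℝ) : ℂ := Complex.exp (2 * Real.pi * Complex.I * ξ)

/-- The partial sum defining `U(t,x)`: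
`2γ + Σ_{0<|k|≤K} (sin(2πγk)/(πk))·e(t·k^n + x·k)`. -/
noncomputable def Upartial (n : ℕ) (γ t x : ℝ) (K : ℕ) : ℂ :=
  Complex.ofReal (2 * γ) +
    ∑ k ∈ (Finset.Icc (-(K : ℤ)) (K : ℤ)).filter (· ≠ 0),
      Complex.ofReal (Real.sin (2 * Real.pi * γ * (k : ℝ)) / (Real.pi * (k : ℝ))) *
        ee (t * (k : ℝ) ^ n + x * (k : ℝ))

/-- The smooth cutoff `φ`: `C^∞`, `φ(x) = 1` for `|x| ≤ 1/2`, `φ(x) = 0` for `|x| ≥ 2`,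
and `φ(x) + φ(1/x) = 1` for all `x ≠ 0`. -/
def GoodPhi (φ : ℝ → ℝ) : Prop :=
  ContDiff ℝ (⊤ : ℕ∞) φ ∧ (∀ x : ℝ, |x| ≤ 1 / 2 → φ x = 1) ∧ (∀ x : ℝ, 2 ≤ |x| → φ x = 0) ∧
    (∀ x : ℝ, x ≠ 0 → φ x + φ x⁻¹ = 1)

/-- `U*(t,x) = 2γ + (1/π)·Σ_{k≠0} φ(k·t^α)·(sin(2πγk)/k)·e(t·k^n + x·k)`
(the `k = 0` term vanishes since `sin(0)/0 = 0`). -/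
noncomputable def Ustar (n : ℕ) (γ : ℝ) (φ : ℝ → ℝ) (α t x : ℝ) : ℂ :=
  Complex.ofReal (2 * γ) + Complex.ofReal (1 / Real.pi) *
    ∑' k : ℤ,
      Complex.ofReal (φ ((k : ℝ) * t ^ α) * (Real.sin (2 * Real.pi * γ * (k : ℝ)) / (k : ℝ))) *
        ee (t * (k : ℝ) ^ n + x * (k : ℝ))

lemma divisor_bound (ε : ℝ) (hε : 0 < ε) :
    ∃ C : ℝ, 1 ≤ C ∧ ∀ m : ℕ, m ≠ 0 → (#m.divisors : ℝ) ≤ C * (m : ℝ) ^ ε := by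
  set A : ℝ := max 1 (1 / (ε * Real.log 2)) with hA
  have hl2 : 0 < Real.log 2 := Real.log_pos (by norm_num)
  have hA1 : 1 ≤ A := le_max_left _ _
  have hA2 : 1 ≤ A * (ε * Real.log 2) := by
    have : 1 / (ε * Real.log 2) ≤ A := le_max_right _ _
    rw [div_le_iff₀ (by positivity)] at this
    exact this
  obtain ⟨P, hP⟩ := exists_nat_ge ((2 : ℝ) ^ (1 / ε))
  have key : ∀ p : ℕ, p.Prime → ∀ a : ℕ, ((a : ℝ) + 1) ≤
      (if p < P then A else 1) * ((p : ℝ) ^ a) ^ ε := by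
    intro p hp a
    have hp2 : (2 : ℝ) ≤ p := by exact_mod_cast hp.two_le
    split_ifs with h
    · have h1 : (2 : ℝ) ^ (ε * a) ≤ ((p : ℝ) ^ a) ^ ε := by
        rw [← Real.rpow_natCast, ← Real.rpow_mul (by positivity), mul_comm ε]
        exact Real.rpow_le_rpow (by norm_num) hp2 (by positivity)
      have h2 : 1 + Real.log 2 * (ε * a) ≤ (2 : ℝ) ^ (ε * a) := by
        rw [Real.rpow_def_of_pos (by norm_num)]
        linarith [Real.add_one_le_exp (Real.log 2 * (ε * a))]
      calc (a : ℝ) + 1 ≤ A * (1 + Real.log 2 * (ε * a)) := by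
            have : (a : ℝ) * 1 ≤ a * (A * (ε * Real.log 2)) := by gcongr
            nlinarith
        _ ≤ _ := by gcongr; exact h2.trans h1
    · push Not at h
      have h1 : (2 : ℝ) ^ (1 / ε) ≤ p := hP.trans (by exact_mod_cast h)
      have h2 : (2 : ℝ) ≤ (p : ℝ) ^ ε := by
        have := Real.rpow_le_rpow (by positivity) h1 hε.le
        rwa [← Real.rpow_mul (by norm_num), one_div_mul_cancel hε.ne', Real.rpow_one] at this
      have h3 : ((p : ℝ) ^ a) ^ ε = ((p : ℝ) ^ ε) ^ a := by
        rw [← Real.rpow_natCast, ← Real.rpow_natCast, ← Real.rpow_mul (by positivity),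
          ← Real.rpow_mul (by positivity), mul_comm]
      rw [h3, one_mul]
      have h4 : ((a : ℝ) + 1) ≤ 2 ^ a := by
        exact_mod_cast Nat.lt_two_pow_self (n := a)
      exact h4.trans (by gcongr)
  refine ⟨A ^ P, one_le_pow₀ hA1, fun m hm => ?_⟩
  rw [Nat.card_divisors hm]
  push_cast
  have hmm : (m : ℝ) ^ ε = ∏ p ∈ m.primeFactors, ((p : ℝ) ^ (m.factorization p)) ^ ε := by
    rw [Real.finsetProd_rpow _ _ (fun i _ => by positivity)]
    congr 1
    conv_lhs => rw [← Nat.prod_factorization_pow_eq_self hm]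
    rw [Finsupp.prod]
    push_cast
    rfl
  calc ∏ p ∈ m.primeFactors, ((m.factorization p : ℝ) + 1)
      ≤ ∏ p ∈ m.primeFactors, ((if p < P then A else 1) * ((p : ℝ) ^ (m.factorization p)) ^ ε) :=
        Finset.prod_le_prod (fun i _ => by positivity)
          (fun p hp => key p (Nat.prime_of_mem_primeFactors hp) _)
    _ = (∏ p ∈ m.primeFactors, (if p < P then A else 1)) * (m : ℝ) ^ ε := by
        rw [Finset.prod_mul_distrib, hmm]
    _ ≤ A ^ P * (m : ℝ) ^ ε := by
        gcongr
        rw [Finset.prod_ite, Finset.prod_const_one, mul_one, Finset.prod_const]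
        apply pow_le_pow_right₀ hA1
        calc _ ≤ #(Finset.range P) := Finset.card_le_card (fun x hx => by
              simp at hx ⊢; exact hx.2)
          _ = P := by simp

lemma weyl_sq (g : ℕ → ℂ) (L : ℕ) :
    ‖∑ k ∈ range L, g k‖ ^ 2 ≤
      2 * ∑ h ∈ range L, ‖∑ k ∈ range (L - h), g (k + h) * (starRingEnd ℂ) (g k)‖ := by
  have h1 : ∀ L, ‖∑ k ∈ range L, g k‖ ^ 2 ≤
      2 * (∑ m ∈ range L, g m * (starRingEnd ℂ) (∑ k ∈ range (m + 1), g k)).re := by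
    intro L
    induction L with
    | zero => simp
    | succ L ih =>
      rw [Finset.sum_range_succ (fun m => g m * (starRingEnd ℂ) (∑ k ∈ range (m + 1), g k)) L, Complex.add_re, mul_add]
      have : ‖∑ k ∈ range (L + 1), g k‖ ^ 2 ≤ ‖∑ k ∈ range L, g k‖ ^ 2 +
          2 * (g L * (starRingEnd ℂ) (∑ k ∈ range (L + 1), g k)).re := by
        rw [Finset.sum_range_succ]
        generalize ∑ k ∈ range L, g k = s
        rw [← Complex.normSq_eq_norm_sq, ← Complex.normSq_eq_norm_sq, Complex.normSq_apply,
          Complex.normSq_apply]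
        simp
        nlinarith [sq_nonneg (g L).re, sq_nonneg (g L).im]
      linarith
  refine (h1 L).trans ?_
  gcongr
  have h2 : ∑ m ∈ range L, g m * (starRingEnd ℂ) (∑ k ∈ range (m + 1), g k) =
      ∑ h ∈ range L, ∑ k ∈ range (L - h), g (k + h) * (starRingEnd ℂ) (g k) := by
    rw [← Finset.sum_range_diag_flip L (fun h k => g (k + h) * (starRingEnd ℂ) (g k))]
    refine Finset.sum_congr rfl fun m _ => ?_
    rw [map_sum, Finset.mul_sum, ← Finset.sum_range_reflect]
    refine Finset.sum_congr rfl fun k hk => ?_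
    have : k ≤ m := by simp at hk; omega
    simp only [Nat.sub_add_cancel this]
    congr 3
  rw [h2]
  exact (Complex.re_le_norm _).trans (norm_sum_le _ _)

def PolyClass : ℕ → ℝ → (ℕ → ℝ) → Prop
  | 0, β, f => ∃ c : ℝ, ∀ k : ℕ, f k = β * k + c
  | d + 1, β, f => ∀ h : ℕ, PolyClass d (β * h) (fun k => f (k + h) - f k)

lemma polyClass_poly (d : ℕ) : ∀ p : Polynomial ℝ, p.natDegree ≤ d + 1 →
    PolyClass d ((d + 1).factorial * p.coeff (d + 1)) (fun k => p.eval (k : ℝ)) := by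
  induction d with
  | zero =>
    intro p hp
    refine ⟨p.coeff 0, fun k => ?_⟩
    conv_lhs => rw [Polynomial.eq_X_add_C_of_natDegree_le_one hp]
    simp
  | succ d ih =>
    intro p hp h
    set r := Polynomial.taylor (h : ℝ) p - p with hr
    have hc2 : ∀ j, d + 1 < j → r.coeff j = 0 := by
      intro j hj
      rw [hr, Polynomial.coeff_sub, sub_eq_zero]
      rcases Nat.lt_or_ge (d + 1 + 1) j with hj2 | hj2
      · rw [Polynomial.coeff_eq_zero_of_natDegree_lt (by rw [Polynomial.natDegree_taylor]; omega),
          Polynomial.coeff_eq_zero_of_natDegree_lt (by omega)]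
      · have : j = d + 1 + 1 := by omega
        subst this
        rcases Nat.lt_or_ge p.natDegree (d + 1 + 1) with h3 | h3
        · rw [Polynomial.coeff_eq_zero_of_natDegree_lt (by rw [Polynomial.natDegree_taylor]; omega),
            Polynomial.coeff_eq_zero_of_natDegree_lt (by omega)]
        · have h4 : d + 1 + 1 = p.natDegree := by omega
          rw [h4, Polynomial.coeff_taylor_natDegree, Polynomial.leadingCoeff]
    have hdeg : r.natDegree ≤ d + 1 := by
      rw [Polynomial.natDegree_le_iff_coeff_eq_zero]
      intro j hj; exact hc2 j hj
    have hco : r.coeff (d + 1) = (d + 2) * h * p.coeff (d + 2) := by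
      rw [hr, Polynomial.coeff_sub, Polynomial.taylor_coeff]
      have : (Polynomial.hasseDeriv (d + 1) p).natDegree ≤ 1 :=
        (Polynomial.natDegree_hasseDeriv_le _ _).trans (by omega)
      rw [Polynomial.eq_X_add_C_of_natDegree_le_one this]
      simp only [Polynomial.hasseDeriv_coeff]
      simp
      have e1 : 1 + (d + 1) = d + 2 := by ring
      rw [e1]
      have e2 : (d + 2).choose (d + 1) = d + 2 := Nat.choose_succ_self_right (d + 1)
      rw [e2]; push_cast; ring
    have := ih r hdeg
    have e : ((d + 1 + 1).factorial * p.coeff (d + 1 + 1) * h : ℝ) =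
        (d + 1).factorial * r.coeff (d + 1) := by
      rw [hco, Nat.factorial_succ (d + 1)]; push_cast; ring
    show PolyClass d _ _
    rw [e]
    convert this using 2 with k
    rw [hr, Polynomial.eval_sub, Polynomial.taylor_eval]
    push_cast; ring_nf

lemma ee_add (a b : ℝ) : ee (a + b) = ee a * ee b := by
  unfold ee; rw [← Complex.exp_add]; push_cast; ring_nf

lemma ee_zero : ee 0 = 1 := by simp [ee]

lemma norm_ee (a : ℝ) : ‖ee a‖ = 1 := by
  unfold ee
  rw [show (2 * Real.pi * Complex.I * a : ℂ) = ((2 * Real.pi * a : ℝ) : ℂ) * Complex.I by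
    push_cast; ring]
  exact Complex.norm_exp_ofReal_mul_I _

lemma ee_neg (a : ℝ) : ee (-a) = (starRingEnd ℂ) (ee a) := by
  unfold ee; rw [← Complex.exp_conj]; simp [Complex.conj_ofNat]

lemma ee_int (m : ℤ) : ee m = 1 := by
  unfold ee
  rw [Complex.exp_eq_one_iff]
  exact ⟨m, by push_cast; ring⟩

lemma ee_add_int (a : ℝ) (m : ℤ) : ee (a + m) = ee a := by
  rw [ee_add, ee_int, mul_one]

lemma ee_nat_mul (a : ℝ) (m : ℕ) : ee (a * m) = ee a ^ m := by
  unfold ee; rw [← Complex.exp_nat_mul]; push_cast; ring_nf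

open Classical in
noncomputable def gg (K : ℕ) (β : ℝ) (m : ℕ) : ℝ :=
  if ee (β * m) = 1 then (K : ℝ) else min K (2 / ‖ee (β * m) - 1‖)

lemma gg_nonneg (K : ℕ) (β : ℝ) (m : ℕ) : 0 ≤ gg K β m := by
  unfold gg; split_ifs <;> positivity

lemma gg_le (K : ℕ) (β : ℝ) (m : ℕ) : gg K β m ≤ K := by
  unfold gg; split_ifs
  · exact le_rfl
  · exact min_le_left _ _

lemma geom_bound (z : ℂ) (hz : ‖z‖ = 1) (h1 : z ≠ 1) (L : ℕ) :
    ‖∑ k ∈ range L, z ^ k‖ ≤ 2 / ‖z - 1‖ := by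
  rw [geom_sum_eq h1, norm_div]
  gcongr
  calc _ ≤ ‖z ^ L‖ + ‖(1 : ℂ)‖ := norm_sub_le _ _
    _ = 2 := by rw [norm_pow, hz]; norm_num

lemma linear_bound (K L : ℕ) (hL : L ≤ K) (β c : ℝ) :
    ‖∑ k ∈ range L, ee (β * k + c)‖ ≤ gg K β 1 := by
  have h0 : ‖∑ k ∈ range L, ee (β * k + c)‖ ≤ K := by
    refine (norm_sum_le _ _).trans ?_
    simp only [norm_ee]
    simpa using hL
  unfold gg
  split_ifs with h
  · exact h0
  · refine le_min h0 ?_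
    have : ∑ k ∈ range L, ee (β * k + c) = (∑ k ∈ range L, ee β ^ k) * ee c := by
      rw [Finset.sum_mul]
      refine Finset.sum_congr rfl fun k _ => ?_
      rw [ee_add, ee_nat_mul]
    rw [this, norm_mul, norm_ee, mul_one]
    have := geom_bound (ee β) (norm_ee _) (by simpa using h) L
    simpa using this

noncomputable def TT (K : ℕ) (g : ℕ → ℝ) : ℕ → ℕ → ℝ
  | 0 => g
  | j + 1 => fun m => ∑ h ∈ range K, TT K g j (m * h)

lemma TT_nonneg (K : ℕ) (g : ℕ → ℝ) (hg : ∀ m, 0 ≤ g m) (j m : ℕ) : 0 ≤ TT K g j m := by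
  induction j generalizing m with
  | zero => exact hg m
  | succ j ih => exact Finset.sum_nonneg fun h _ => ih _

lemma TT_scale (K : ℕ) (β : ℝ) (h : ℕ) (j m : ℕ) :
    TT K (gg K (β * h)) j m = TT K (gg K β) j (h * m) := by
  induction j generalizing m with
  | zero => simp only [TT, gg]; push_cast; rw [mul_assoc]
  | succ j ih =>
    simp only [TT]
    refine Finset.sum_congr rfl fun h' _ => ?_
    rw [ih, mul_assoc]

lemma weyl_diff (d : ℕ) : ∃ c : ℝ, 0 < c ∧ ∀ (K : ℕ) (β : ℝ) (f : ℕ → ℝ), PolyClass d β f →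
    ∀ L ≤ K, ‖∑ k ∈ range L, ee (f k)‖ ^ (2 ^ d) ≤
      c * (K : ℝ) ^ (2 ^ d - d - 1) * TT K (gg K β) d 1 := by
  induction d with
  | zero =>
    refine ⟨1, one_pos, ?_⟩
    rintro K β f ⟨c, hc⟩ L hL
    simp only [hc]
    simpa [TT] using linear_bound K L hL β c
  | succ d ih =>
    obtain ⟨c, hc, ih⟩ := ih
    refine ⟨2 ^ (2 ^ d) * c, by positivity, ?_⟩
    intro K β f hf L hL
    have hd : d + 1 ≤ 2 ^ d := Nat.lt_two_pow_self
    obtain ⟨p, hp⟩ : ∃ p, 2 ^ d = p + 1 := ⟨2 ^ d - 1, by omega⟩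
    have h1 := weyl_sq (fun k => ee (f k)) L
    have h2 : ‖∑ k ∈ range L, ee (f k)‖ ^ 2 ≤
        2 * ∑ h ∈ range K, ‖∑ k ∈ range (L - h), ee (f (k + h) - f k)‖ := by
      refine h1.trans ?_
      gcongr 2 * ?_
      refine (Finset.sum_le_sum_of_subset_of_nonneg (Finset.range_mono hL)
        (fun _ _ _ => norm_nonneg _)).trans (le_of_eq ?_)
      refine Finset.sum_congr rfl fun h _ => ?_
      congr 1
      refine Finset.sum_congr rfl fun k _ => ?_
      rw [sub_eq_add_neg, ee_add, ee_neg]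
    set F : ℕ → ℝ := fun h => ‖∑ k ∈ range (L - h), ee (f (k + h) - f k)‖ with hF
    have h3 : (∑ h ∈ range K, F h) ^ (2 ^ d) ≤ (K : ℝ) ^ p * ∑ h ∈ range K, F h ^ (2 ^ d) := by
      rcases Nat.eq_zero_or_pos K with hK | hK
      · subst hK; simp
      · have := pow_sum_div_card_le_sum_pow (s := range K) (f := F)
          (fun i _ => norm_nonneg _) p
        rw [div_le_iff₀ (by simp; positivity), ← hp] at this
        rw [mul_comm]
        simpa using this
    have h4 : ∀ h ∈ range K, F h ^ (2 ^ d) ≤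
        c * (K : ℝ) ^ (2 ^ d - d - 1) * TT K (gg K β) d (1 * h) := by
      intro h _
      have := ih K (β * h) _ (hf h) (L - h) (by omega)
      rwa [TT_scale, mul_comm h 1] at this
    calc ‖∑ k ∈ range L, ee (f k)‖ ^ (2 ^ (d + 1))
        = (‖∑ k ∈ range L, ee (f k)‖ ^ 2) ^ (2 ^ d) := by rw [← pow_mul]; ring_nf
      _ ≤ (2 * ∑ h ∈ range K, F h) ^ (2 ^ d) := by gcongr
      _ = 2 ^ (2 ^ d) * (∑ h ∈ range K, F h) ^ (2 ^ d) := by rw [mul_pow]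
      _ ≤ 2 ^ (2 ^ d) * ((K : ℝ) ^ p * ∑ h ∈ range K,
            (c * (K : ℝ) ^ (2 ^ d - d - 1) * TT K (gg K β) d (1 * h))) := by
          gcongr with h hh
          · refine h3.trans ?_
            gcongr with h hh
            exact h4 h hh
      _ = _ := by
          rw [← Finset.mul_sum]
          have : (2 : ℕ) ^ (d + 1) - (d + 1) - 1 = p + (2 ^ d - d - 1) := by
            rw [pow_succ]; omega
          rw [this, pow_add]
          simp only [TT]
          ring

lemma mul_count (H K : ℕ) (F : ℕ → ℝ) (hF : ∀ m, 0 ≤ F m) (D : ℝ)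
    (hD : ∀ m : ℕ, m ≠ 0 → m ≤ H * K → (#m.divisors : ℝ) ≤ D) :
    ∑ m ∈ Icc 1 H, ∑ h ∈ Icc 1 K, F (m * h) ≤ D * ∑ m ∈ Icc 1 (H * K), F m := by
  rw [← Finset.sum_product']
  rw [← Finset.sum_fiberwise_of_maps_to (t := Icc 1 (H * K)) (g := fun x : ℕ × ℕ => x.1 * x.2)]
  · rw [Finset.mul_sum]
    refine Finset.sum_le_sum fun m hm => ?_
    rw [Finset.mem_Icc] at hm
    calc _ = ∑ x ∈ (Icc 1 H ×ˢ Icc 1 K).filter (fun x => x.1 * x.2 = m), F m := by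
          refine Finset.sum_congr rfl fun x hx => ?_
          rw [(Finset.mem_filter.mp hx).2]
      _ = #((Icc 1 H ×ˢ Icc 1 K).filter (fun x => x.1 * x.2 = m)) * F m := by
          rw [Finset.sum_const, nsmul_eq_mul]
      _ ≤ D * F m := by
          gcongr
          · exact hF m
          refine le_trans ?_ (hD m (by omega) hm.2)
          norm_cast
          apply Finset.card_le_card_of_injOn (fun x : ℕ × ℕ => x.1)
          · intro x hx
            simp only [Finset.coe_filter, Set.mem_ofPred_eq] at hx
            simp only [Finset.mem_coe, Nat.mem_divisors]
            exact ⟨⟨x.2, hx.2.symm⟩, by omega⟩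
          · intro x hx y hy hxy
            simp only [Finset.coe_filter, Set.mem_ofPred_eq, Finset.mem_product,
              Finset.mem_Icc] at hx hy hxy
            refine Prod.ext hxy (Nat.eq_of_mul_eq_mul_left (show 0 < x.1 by omega) ?_)
            rw [hx.2, hxy, hy.2]
  · intro x hx
    simp only [Finset.mem_product, Finset.mem_Icc] at hx ⊢
    exact ⟨Nat.mul_pos hx.1.1 hx.2.1, Nat.mul_le_mul hx.1.2 hx.2.2⟩

lemma TT_zero_le (K : ℕ) (g : ℕ → ℝ) (hg0 : g 0 ≤ K) (j : ℕ) :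
    TT K g j 0 ≤ (K : ℝ) ^ (j + 1) := by
  induction j with
  | zero => simpa [TT] using hg0
  | succ j ih =>
    simp only [TT, zero_mul, Finset.sum_const, Finset.card_range, nsmul_eq_mul]
    rw [pow_succ']
    gcongr

lemma TT_succ_le (K : ℕ) (g : ℕ → ℝ) (hg : ∀ m, 0 ≤ g m) (j m : ℕ) :
    TT K g (j + 1) m ≤ TT K g j 0 + ∑ h ∈ Icc 1 K, TT K g j (m * h) := by
  simp only [TT]
  have h0 : ∑ h ∈ range K, TT K g j (m * h) ≤ ∑ h ∈ range (K + 1), TT K g j (m * h) :=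
    Finset.sum_le_sum_of_subset_of_nonneg (Finset.range_mono (by omega))
      fun _ _ _ => TT_nonneg K g hg _ _
  refine h0.trans (le_of_eq ?_)
  rw [Finset.sum_range_succ', add_comm]
  congr 1
  rw [Finset.range_eq_Ico, Finset.sum_Ico_add' (fun h => TT K g j (m * h)) 0 K 1]
  rfl

lemma TT_avg (K : ℕ) (hK : 1 ≤ K) (g : ℕ → ℝ) (hg : ∀ m, 0 ≤ g m) (hg0 : g 0 ≤ K) (D : ℝ)
    (hD1 : 1 ≤ D) (j : ℕ) : ∀ H : ℕ,
    (∀ m : ℕ, m ≠ 0 → m ≤ H * K ^ j → (#m.divisors : ℝ) ≤ D) →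
    ∑ m ∈ Icc 1 H, TT K g j m ≤
      D ^ j * (∑ m ∈ Icc 1 (H * K ^ j), g m + j * (H * K ^ j)) := by
  induction j with
  | zero => intro H _; simp [TT]
  | succ j ih =>
    intro H hD
    have hA := ih (H * K) (fun m hm hm2 => hD m hm (by rw [pow_succ']; linarith [hm2, mul_assoc H K (K ^ j)]))
    have hB := mul_count H K (TT K g j) (TT_nonneg K g hg j) D (fun m hm hm2 => hD m hm
      (hm2.trans (by
        gcongr
        exact Nat.le_self_pow (by omega) K)))
    have hC := TT_zero_le K g hg0 j
    have e : H * K * K ^ j = H * K ^ (j + 1) := by ring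
    rw [e] at hA
    have hDj : 1 ≤ D ^ (j + 1) := one_le_pow₀ hD1
    have hS : 0 ≤ (H : ℝ) * (K : ℝ) ^ (j + 1) := by positivity
    calc ∑ m ∈ Icc 1 H, TT K g (j + 1) m
        ≤ ∑ m ∈ Icc 1 H, (TT K g j 0 + ∑ h ∈ Icc 1 K, TT K g j (m * h)) :=
          Finset.sum_le_sum fun m _ => TT_succ_le K g hg j m
      _ = H * TT K g j 0 + ∑ m ∈ Icc 1 H, ∑ h ∈ Icc 1 K, TT K g j (m * h) := by
          rw [Finset.sum_add_distrib]; simp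
      _ ≤ H * (K : ℝ) ^ (j + 1) + D * (D ^ j * (∑ m ∈ Icc 1 (H * K ^ (j + 1)), g m
            + j * (H * K ^ (j + 1)))) := by
          refine add_le_add (by gcongr) (hB.trans ?_)
          gcongr
          have e2 : (H : ℝ) * K * (K : ℝ) ^ j = H * (K : ℝ) ^ (j + 1) := by ring
          push_cast at hA
          rw [e2] at hA
          exact hA
      _ ≤ _ := by
          push_cast
          have : H * (K : ℝ) ^ (j + 1) ≤ D ^ (j + 1) * (H * (K : ℝ) ^ (j + 1)) :=
            le_mul_of_one_le_left hS hDj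
          rw [pow_succ' D] at *
          linarith

lemma ee_lower (θ : ℝ) (h0 : 0 ≤ θ) (h1 : θ ≤ 1) : 4 * min θ (1 - θ) ≤ ‖ee θ - 1‖ := by
  have e : ‖ee θ - 1‖ = 2 * |Real.sin (Real.pi * θ)| := by
    unfold ee
    rw [show (2 * Real.pi * Complex.I * θ : ℂ) = Complex.I * ((2 * Real.pi * θ : ℝ) : ℂ) by
      push_cast; ring, Complex.norm_exp_I_mul_ofReal_sub_one, Real.norm_eq_abs, abs_mul]
    norm_num
    ring_nf
  have hpi := Real.pi_pos
  rw [e]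
  have key : 2 * min θ (1 - θ) ≤ Real.sin (Real.pi * θ) := by
    rcases le_total θ (1 / 2) with h | h
    · rw [min_eq_left (by linarith)]
      have := Real.mul_le_sin (x := Real.pi * θ) (by positivity) (by nlinarith)
      calc 2 * θ = 2 / Real.pi * (Real.pi * θ) := by field_simp
        _ ≤ _ := this
    · rw [min_eq_right (by linarith)]
      have := Real.mul_le_sin (x := Real.pi * (1 - θ)) (mul_nonneg hpi.le (by linarith)) (by nlinarith)
      rw [show Real.pi * (1 - θ) = Real.pi - Real.pi * θ by ring, Real.sin_pi_sub] at this
      calc 2 * (1 - θ) = 2 / Real.pi * (Real.pi - Real.pi * θ) := by field_simp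
        _ ≤ _ := this
  linarith [le_abs_self (Real.sin (Real.pi * θ))]

lemma gg_point (K q r : ℕ) (hr : 1 ≤ r) (hrq : r < q) :
    gg K (1 / q) r ≤ q / 2 * (1 / r + 1 / ((q : ℝ) - r)) := by
  have hr' : (0 : ℝ) < r := by exact_mod_cast hr
  have hrq' : (r : ℝ) < q := by exact_mod_cast hrq
  have hq : (0 : ℝ) < q := by linarith
  set θ : ℝ := 1 / q * r with hθ
  have hθ0 : 0 < θ := by positivity
  have hθ1 : θ < 1 := by rw [hθ, one_div_mul_eq_div, div_lt_one hq]; exact hrq'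
  have hmin : 0 < min θ (1 - θ) := lt_min hθ0 (by linarith)
  have hl := ee_lower θ hθ0.le hθ1.le
  have hne : ee θ ≠ 1 := by
    intro h; rw [h, sub_self, norm_zero] at hl; linarith
  unfold gg
  rw [← hθ, if_neg hne]
  refine (min_le_right _ _).trans ?_
  calc 2 / ‖ee θ - 1‖ ≤ 2 / (4 * min θ (1 - θ)) := by gcongr
    _ = 1 / 2 * (1 / min θ (1 - θ)) := by field_simp; norm_num
    _ ≤ 1 / 2 * (1 / θ + 1 / (1 - θ)) := by
        gcongr
        have a1 : 0 < 1 / θ := by positivity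
        have a2 : 0 < 1 / (1 - θ) := one_div_pos.mpr (by linarith)
        rcases min_choice θ (1 - θ) with h | h <;> rw [h] <;> linarith
    _ = _ := by
        have : 1 - θ = (q - r) / q := by rw [hθ]; field_simp
        rw [this, hθ]
        have : (q : ℝ) - r ≠ 0 := by linarith
        field_simp

lemma harm (q : ℕ) : ∑ i ∈ range q, (1 : ℝ) / ((i : ℝ) + 1) ≤ 1 + Real.log q := by
  have := harmonic_le_one_add_log q
  unfold harmonic at this
  push_cast at this
  simpa using this

lemma sum_gg_one (K q : ℕ) (hq : 1 ≤ q) :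
    ∑ r ∈ range q, gg K (1 / q) r ≤ K + q * (1 + Real.log q) := by
  obtain ⟨p, rfl⟩ : ∃ p, q = p + 1 := ⟨q - 1, by omega⟩
  rw [Finset.sum_range_succ', add_comm]
  refine add_le_add (gg_le _ _ _) ?_
  have h1 : ∑ i ∈ range p, gg K (1 / (p + 1 : ℕ)) (i + 1) ≤
      ∑ i ∈ range p, ((p + 1 : ℕ) / 2 * (1 / ((i : ℝ) + 1)) + (p + 1 : ℕ) / 2 * (1 / (((p - 1 - i : ℕ) : ℝ) + 1))) := by
    refine Finset.sum_le_sum fun i hi => ?_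
    have hi' : i < p := Finset.mem_range.mp hi
    have := gg_point K (p + 1) (i + 1) (by omega) (by omega)
    refine this.trans (le_of_eq ?_)
    have e : ((p - 1 - i : ℕ) : ℝ) + 1 = ((p + 1 : ℕ) : ℝ) - ((i + 1 : ℕ) : ℝ) := by
      rw [show p - 1 - i = p - (i + 1) by omega, Nat.cast_sub (by omega)]; push_cast; ring
    rw [e]; push_cast; ring
  refine h1.trans ?_
  rw [Finset.sum_add_distrib, ← Finset.mul_sum, ← Finset.mul_sum,
    Finset.sum_range_reflect (fun i => 1 / ((i : ℝ) + 1)) p, ← mul_add, ← two_mul]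
  have h2 := harm p
  have h3 : Real.log p ≤ Real.log (p + 1 : ℕ) := by
    rcases Nat.eq_zero_or_pos p with h | h
    · subst h; simp
    · apply Real.log_le_log (by exact_mod_cast h); push_cast; linarith
  have h4 : (0 : ℝ) ≤ (p + 1 : ℕ) := by positivity
  nlinarith

lemma sum_gg_period (K q : ℕ) (hq : 1 ≤ q) (u : ℤ) (hu : Int.gcd u q = 1) :
    ∑ r ∈ range q, gg K (u / q) r ≤ K + q * (1 + Real.log q) := by
  refine le_trans ?_ (sum_gg_one K q hq)
  have hq0 : (q : ℤ) ≠ 0 := by omega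
  have hqR : (q : ℝ) ≠ 0 := by positivity
  set σ : ℕ → ℕ := fun m => ((u * m) % q).toNat with hσ
  have hσc : ∀ m, ((σ m : ℕ) : ℤ) = (u * m) % q := fun m =>
    Int.toNat_of_nonneg (Int.emod_nonneg _ hq0)
  have h1 : ∀ m : ℕ, gg K (u / q) m = gg K (1 / q) (σ m) := by
    intro m
    have : ee (u / q * m) = ee (1 / q * (σ m : ℕ)) := by
      rw [← ee_add_int (1 / q * (σ m : ℕ)) ((u * m) / q)]
      congr 1
      have h2 : (u * m : ℤ) = q * ((u * m) / q) + (σ m : ℕ) := by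
        rw [hσc]; exact (Int.mul_ediv_add_emod _ _).symm
      have h3 : (u * m : ℝ) = q * ((u * m / q : ℤ) : ℝ) + (σ m : ℕ) := by exact_mod_cast h2
      field_simp
      linarith
    unfold gg; rw [this]
  have hinj : Set.InjOn σ (range q) := by
    intro a ha b hb hab
    have ha' : a < q := Finset.mem_range.mp ha
    have hb' : b < q := Finset.mem_range.mp hb
    have h2 : (u * a) % q = (u * b) % (q : ℤ) := by rw [← hσc, ← hσc, hab]
    have h3 : (q : ℤ) ∣ u * (b - a) := by
      rw [mul_sub]; exact Int.ModEq.dvd h2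
    have h4 : (q : ℤ) ∣ (b - a) := by
      refine IsCoprime.dvd_of_dvd_mul_left ?_ h3
      rw [Int.isCoprime_iff_gcd_eq_one, Int.gcd_comm]; exact hu
    obtain ⟨c, hc⟩ := h4
    have : c = 0 := by
      by_contra hne
      rcases lt_or_gt_of_ne hne with h | h
      · nlinarith
      · nlinarith
    subst this; omega
  rw [Finset.sum_congr rfl (fun m _ => h1 m), ← Finset.sum_image (g := σ) (f := gg K (1 / q)) hinj]
  refine Finset.sum_le_sum_of_subset_of_nonneg ?_ (fun _ _ _ => gg_nonneg _ _ _)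
  intro m hm
  obtain ⟨a, _, rfl⟩ := Finset.mem_image.mp hm
  rw [Finset.mem_range]
  have := Int.emod_lt_of_pos (u * a) (show (0 : ℤ) < q by omega)
  rw [← hσc] at this
  exact_mod_cast this

lemma sum_periodic (q : ℕ) (F : ℕ → ℝ) (hF : ∀ m, F (m + q) = F m) (B : ℕ) :
    ∑ m ∈ range (q * B), F m = B * ∑ m ∈ range q, F m := by
  induction B with
  | zero => simp
  | succ B ih =>
    rw [mul_add, mul_one, Finset.sum_range_add, ih]
    have : ∀ m, F (q * B + m) = F m := by
      intro m
      have : ∀ B : ℕ, F (q * B + m) = F m := by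
        intro B
        induction B with
        | zero => simp
        | succ B ih => rw [← ih, ← hF (q * B + m)]; congr 1; ring
      exact this B
    simp only [this]; push_cast; ring

lemma sum_gg (K q : ℕ) (hq : 1 ≤ q) (u : ℤ) (hu : Int.gcd u q = 1) (X : ℕ) :
    ∑ m ∈ Icc 1 X, gg K (u / q) m ≤ (X / q + 1) * (K + q * (1 + Real.log q)) := by
  have hqR : (q : ℝ) ≠ 0 := by positivity
  have hper : ∀ m, gg K (u / q) (m + q) = gg K (u / q) m := by
    intro m
    have : ee (u / q * (m + q : ℕ)) = ee (u / q * m) := by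
      rw [← ee_add_int (u / q * m) u]; congr 1; push_cast; field_simp
    unfold gg; rw [this]
  have hlog : 0 ≤ Real.log q := Real.log_nonneg (by exact_mod_cast hq)
  calc ∑ m ∈ Icc 1 X, gg K (u / q) m ≤ ∑ m ∈ range (q * (X / q + 1)), gg K (u / q) m := by
        refine Finset.sum_le_sum_of_subset_of_nonneg ?_ (fun _ _ _ => gg_nonneg _ _ _)
        intro m hm
        rw [Finset.mem_Icc] at hm
        rw [Finset.mem_range]
        exact hm.2.trans_lt (Nat.lt_mul_div_succ X (by omega))
    _ = (X / q + 1 : ℕ) * ∑ m ∈ range q, gg K (u / q) m := sum_periodic q _ hper _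
    _ ≤ (X / q + 1) * (K + q * (1 + Real.log q)) := by
        refine mul_le_mul ?_ (sum_gg_period K q hq u hu)
          (Finset.sum_nonneg fun _ _ => gg_nonneg _ _ _) (by positivity)
        push_cast
        exact add_le_add Nat.cast_div_le le_rfl

lemma sum_gg_mul (K q : ℕ) (hq : 1 ≤ q) (u : ℤ) (hu : Int.gcd u q = 1) (X A : ℕ) (hA : 1 ≤ A) :
    ∑ m ∈ Icc 1 X, gg K (A * (u / q)) m ≤
      ((A * X : ℝ) / q + 1) * (K + q * (1 + Real.log q)) := by
  have h := sum_gg K q hq u hu (A * X)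
  push_cast at h
  refine le_trans ?_ h
  have h1 : ∀ m : ℕ, gg K (A * (u / q)) m = gg K (u / q) (A * m) := by
    intro m; unfold gg; push_cast
    rw [show (A * (u / q : ℝ) * m) = (u / q) * (A * m) by ring]
  have hinj : Set.InjOn (fun m => A * m) (Icc 1 X : Finset ℕ) := by
    intro a _ b _ hab
    exact Nat.eq_of_mul_eq_mul_left (by omega) hab
  rw [Finset.sum_congr rfl (fun m _ => h1 m),
    ← Finset.sum_image (g := fun m => A * m) (f := gg K (u / q)) hinj]
  refine Finset.sum_le_sum_of_subset_of_nonneg ?_ (fun _ _ _ => gg_nonneg _ _ _)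
  intro m hm
  obtain ⟨a, ha, rfl⟩ := Finset.mem_image.mp hm
  rw [Finset.mem_Icc] at ha ⊢
  exact ⟨Nat.mul_pos (by omega) (by omega), Nat.mul_le_mul_left _ ha.2⟩

lemma log_bd (δ : ℝ) (hδ : 0 < δ) (q : ℕ) (hq : 1 ≤ q) :
    1 + Real.log q ≤ (1 + 1 / δ) * (q : ℝ) ^ δ := by
  have hq1 : (1 : ℝ) ≤ q := by exact_mod_cast hq
  have h1 := Real.log_le_rpow_div (by positivity : (0 : ℝ) ≤ q) hδ
  have h2 : 1 ≤ (q : ℝ) ^ δ := Real.one_le_rpow hq1 hδ.le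
  rw [add_mul, one_mul, one_div_mul_eq_div]
  linarith

lemma weyl_pow (j : ℕ) (ε : ℝ) (hε : 0 < ε) : ∃ C : ℝ, 0 < C ∧ ∀ (u : ℤ) (q : ℕ), 1 ≤ q →
    Int.gcd u q = 1 → ∀ f : ℕ → ℝ, PolyClass (j + 1) ((j + 2).factorial * (u / q)) f →
    ∀ K : ℕ, 1 ≤ K → ‖∑ k ∈ range K, ee (f k)‖ ^ (2 ^ (j + 1)) ≤
      C * (K : ℝ) ^ (2 ^ (j + 1)) * ((K : ℝ) * q) ^ ε * (1 / K + 1 / q + q / (K : ℝ) ^ (j + 2)) := by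
  obtain ⟨c, hc, hW⟩ := weyl_diff (j + 1)
  set δ : ℝ := ε / (j + 1) ^ 2 with hδ
  have hδ0 : 0 < δ := by positivity
  obtain ⟨Cd, hCd, hdiv⟩ := divisor_bound δ hδ0
  set A : ℕ := (j + 2).factorial with hA
  have hA1 : 1 ≤ A := Nat.succ_le_of_lt (Nat.factorial_pos _)
  refine ⟨c * Cd ^ j * (1 + 1 / ε) * (1 + 2 * A + j), by positivity, ?_⟩
  intro u q hq hu f hf K hK
  have hK1 : (1 : ℝ) ≤ K := by exact_mod_cast hK
  have hq1 : (1 : ℝ) ≤ q := by exact_mod_cast hq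
  have hA1' : (1 : ℝ) ≤ A := by exact_mod_cast hA1
  have h1 := hW K _ f hf K le_rfl
  set g := gg K (A * ((u : ℝ) / q)) with hg
  set D : ℝ := Cd * (((K ^ (j + 1) : ℕ) : ℝ)) ^ δ with hD
  have hKp1 : (1 : ℝ) ≤ ((K ^ (j + 1) : ℕ) : ℝ) := by push_cast; exact one_le_pow₀ hK1
  have hD1 : 1 ≤ D := by
    rw [hD]; exact one_le_mul_of_one_le_of_one_le hCd (Real.one_le_rpow hKp1 hδ0.le)
  have hDd : ∀ m : ℕ, m ≠ 0 → m ≤ K * K ^ j → (#m.divisors : ℝ) ≤ D := by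
    intro m hm hm2
    refine (hdiv m hm).trans ?_
    rw [hD]
    gcongr
    calc m ≤ K * K ^ j := hm2
      _ = K ^ (j + 1) := by ring
  have h2 := TT_avg K hK g (gg_nonneg _ _) (gg_le _ _ _) D hD1 j K hDd
  have h3 := TT_succ_le K g (gg_nonneg _ _) j 1
  have h4 := TT_zero_le K g (gg_le _ _ _) j
  simp only [one_mul] at h3
  have h5 := sum_gg_mul K q hq u hu (K * K ^ j) A hA1
  set Λ : ℝ := 1 + Real.log q with hΛ
  have hΛ1 : 1 ≤ Λ := by have := Real.log_nonneg hq1; linarith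
  set Q : ℝ := 1 / K + 1 / q + q / (K : ℝ) ^ (j + 2) with hQ
  have hQ0 : 0 < Q := by positivity
  have hKQ : (K : ℝ) ^ (j + 2) * Q = (K : ℝ) ^ (j + 1) + (K : ℝ) ^ (j + 2) / q + q := by
    rw [hQ]; field_simp; ring
  have e0 : ((K * K ^ j : ℕ) : ℝ) = (K : ℝ) ^ (j + 1) := by push_cast; ring
  have hKj : (K : ℝ) ≤ (K : ℝ) ^ (j + 1) := le_self_pow₀ hK1 (by omega)
  have h6 : ((A * (K * K ^ j : ℕ) : ℝ) / q + 1) * (K + q * Λ) ≤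
      2 * A * Λ * ((K : ℝ) ^ (j + 2) * Q) := by
    rw [e0]
    calc ((A * (K : ℝ) ^ (j + 1)) / q + 1) * (K + q * Λ)
        ≤ (A * (K : ℝ) ^ (j + 1) / q + A) * (Λ * K + q * Λ) := by
          gcongr
          exact le_mul_of_one_le_left (by positivity) hΛ1
      _ = A * Λ * ((K : ℝ) ^ (j + 2) / q + (K : ℝ) ^ (j + 1) + K + q) := by
          field_simp; ring
      _ ≤ A * Λ * (2 * ((K : ℝ) ^ (j + 2) * Q)) := by
          gcongr
          rw [hKQ]
          have : 0 ≤ (K : ℝ) ^ (j + 2) / q := by positivity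
          linarith
      _ = _ := by ring
  have hDj : 1 ≤ D ^ j := one_le_pow₀ hD1
  have hKQ1 : (K : ℝ) ^ (j + 1) ≤ (K : ℝ) ^ (j + 2) * Q := by
    rw [hKQ]
    have : 0 ≤ (K : ℝ) ^ (j + 2) / q := by positivity
    linarith
  have hE : D ^ j * Λ ≤ Cd ^ j * (1 + 1 / ε) * ((K : ℝ) * q) ^ ε := by
    have hDjle : D ^ j ≤ Cd ^ j * (K : ℝ) ^ ε := by
      rw [hD, mul_pow]
      gcongr
      push_cast
      rw [← Real.rpow_natCast, ← Real.rpow_natCast, ← Real.rpow_mul (by positivity),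
        ← Real.rpow_mul (by positivity)]
      apply Real.rpow_le_rpow_of_exponent_le hK1
      rw [hδ]
      push_cast
      have hj : (0 : ℝ) ≤ j := by positivity
      have : ((j : ℝ) + 1) * (ε / (j + 1) ^ 2 * j) = ε * (j / (j + 1)) := by field_simp
      rw [this]
      have : (j : ℝ) / (j + 1) ≤ 1 := by rw [div_le_one (by positivity)]; linarith
      nlinarith
    have := log_bd ε hε q hq
    rw [Real.mul_rpow (by positivity) (by positivity)]
    calc D ^ j * Λ ≤ (Cd ^ j * (K : ℝ) ^ ε) * ((1 + 1 / ε) * (q : ℝ) ^ ε) := by gcongr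
      _ = _ := by ring
  have h7 : TT K g (j + 1) 1 ≤ (1 + 2 * A + j) * (D ^ j * Λ) * ((K : ℝ) ^ (j + 2) * Q) := by
    have hDL : 1 ≤ D ^ j * Λ := one_le_mul_of_one_le_of_one_le hDj hΛ1
    have a1 : (K : ℝ) ^ (j + 1) ≤ (D ^ j * Λ) * ((K : ℝ) ^ (j + 2) * Q) :=
      hKQ1.trans (le_mul_of_one_le_left (by positivity) hDL)
    have a2 : D ^ j * (∑ m ∈ Icc 1 (K * K ^ j), g m + j * (K * K ^ j)) ≤
        D ^ j * (2 * A * Λ * ((K : ℝ) ^ (j + 2) * Q) + j * (Λ * ((K : ℝ) ^ (j + 2) * Q))) := by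
      refine mul_le_mul_of_nonneg_left (add_le_add (h5.trans h6)
        (mul_le_mul_of_nonneg_left ?_ (by positivity))) (by positivity)
      · rw [← pow_succ']
        exact hKQ1.trans (le_mul_of_one_le_left (by positivity) hΛ1)
    calc TT K g (j + 1) 1 ≤ _ := h3
      _ ≤ (K : ℝ) ^ (j + 1) + D ^ j * (∑ m ∈ Icc 1 (K * K ^ j), g m + j * (K * K ^ j)) :=
          add_le_add h4 h2
      _ ≤ _ := add_le_add a1 a2
      _ = _ := by ring
  have hd : j + 1 + 1 ≤ 2 ^ (j + 1) := Nat.lt_two_pow_self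
  calc ‖∑ k ∈ range K, ee (f k)‖ ^ (2 ^ (j + 1))
      ≤ c * (K : ℝ) ^ (2 ^ (j + 1) - (j + 1) - 1) * TT K g (j + 1) 1 := h1
    _ ≤ c * (K : ℝ) ^ (2 ^ (j + 1) - (j + 1) - 1) *
        ((1 + 2 * A + j) * (Cd ^ j * (1 + 1 / ε) * ((K : ℝ) * q) ^ ε) * ((K : ℝ) ^ (j + 2) * Q)) := by
        gcongr
        refine h7.trans ?_
        gcongr
    _ = c * Cd ^ j * (1 + 1 / ε) * (1 + 2 * A + j) *
        ((K : ℝ) ^ (2 ^ (j + 1) - (j + 1) - 1) * (K : ℝ) ^ (j + 2)) * ((K : ℝ) * q) ^ ε * Q := by ring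
    _ = _ := by
        rw [← pow_add]
        congr 4
        omega

lemma weyl_ineq (j : ℕ) (ε : ℝ) (hε : 0 < ε) : ∃ C : ℝ, 0 < C ∧ ∀ (u : ℤ) (q : ℕ), 1 ≤ q →
    Int.gcd u q = 1 → ∀ f : ℕ → ℝ, PolyClass (j + 1) ((j + 2).factorial * (u / q)) f →
    ∀ K : ℕ, 1 ≤ K → ∀ R : ℝ, 1 / K + 1 / q + q / (K : ℝ) ^ (j + 2) ≤ R →
    ‖∑ k ∈ range K, ee (f k)‖ ≤
      C * (K : ℝ) * ((K : ℝ) * q) ^ ε * R ^ ((1 : ℝ) / 2 ^ (j + 1)) := by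
  obtain ⟨C, hC, h⟩ := weyl_pow j ε hε
  refine ⟨C + 1, by positivity, ?_⟩
  intro u q hq hu f hf K hK R hR
  have h1 := h u q hq hu f hf K hK
  have hK1 : (1 : ℝ) ≤ K := by exact_mod_cast hK
  have hq1 : (1 : ℝ) ≤ q := by exact_mod_cast hq
  have hR0 : 0 < R := lt_of_lt_of_le (by positivity) hR
  have hp : (2 : ℕ) ^ (j + 1) ≠ 0 := by positivity
  have hKq : 1 ≤ ((K : ℝ) * q) ^ ε :=
    Real.one_le_rpow (one_le_mul_of_one_le_of_one_le hK1 hq1) hε.le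
  refine le_of_pow_le_pow_left₀ hp (by positivity) (h1.trans ?_)
  rw [mul_pow, mul_pow, mul_pow, ← Real.rpow_natCast (R ^ _), ← Real.rpow_mul hR0.le]
  have : (1 : ℝ) / 2 ^ (j + 1) * ((2 ^ (j + 1) : ℕ) : ℝ) = 1 := by push_cast; field_simp
  rw [this, Real.rpow_one]
  gcongr
  · exact (by linarith : C ≤ C + 1).trans (le_self_pow₀ (by linarith) hp)
  · exact le_self_pow₀ hKq hp

lemma abel_id (w : ℕ → ℝ) (a : ℕ → ℂ) (M : ℕ) :
    ∑ k ∈ range M, (w k : ℂ) * a k = (w M : ℂ) * ∑ k ∈ range M, a k +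
      ∑ k ∈ range M, ((w k - w (k + 1) : ℝ) : ℂ) * ∑ i ∈ range (k + 1), a i := by
  induction M with
  | zero => simp
  | succ M ih =>
    rw [Finset.sum_range_succ (fun k => (w k : ℂ) * a k), ih,
      Finset.sum_range_succ (fun k => ((w k - w (k + 1) : ℝ) : ℂ) * ∑ i ∈ range (k + 1), a i),
      Finset.sum_range_succ a]
    push_cast; ring

lemma abel_bd (w : ℕ → ℝ) (a : ℕ → ℂ) (M : ℕ) :
    ‖∑ k ∈ range M, (w k : ℂ) * a k‖ ≤ |w M| * ‖∑ k ∈ range M, a k‖ +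
      ∑ k ∈ range M, |w k - w (k + 1)| * ‖∑ i ∈ range (k + 1), a i‖ := by
  rw [abel_id]
  refine (norm_add_le _ _).trans (add_le_add ?_ ((norm_sum_le _ _).trans (le_of_eq ?_)))
  · rw [norm_mul, Complex.norm_real, Real.norm_eq_abs]
  · refine Finset.sum_congr rfl fun k _ => ?_
    rw [norm_mul, Complex.norm_real, Real.norm_eq_abs]

lemma split_sum (F : ℕ → ℝ) (c₁ c₂ X : ℝ) (h1 : 0 ≤ c₁) (h2 : 0 ≤ c₂) (hX : 0 < X)
    (hF1 : ∀ m, F m ≤ c₁) (hF2 : ∀ m : ℕ, F m ≤ c₂ / (((m : ℝ) + 1) * (m + 2))) (T : ℕ) :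
    ∑ k ∈ range T, F k ≤ c₁ * X + c₂ / X := by
  have key : ∑ k ∈ range T, F k ≤
      if (T : ℝ) ≤ X then c₁ * T else c₁ * X + c₂ * (1 / X - 1 / (T + 1)) := by
    induction T with
    | zero => simp [hX.le]
    | succ T ih =>
      rw [Finset.sum_range_succ]
      have e : c₂ / (((T : ℝ) + 1) * (T + 2)) = c₂ * (1 / (T + 1) - 1 / (T + 1 + 1)) := by
        field_simp; ring
      have f1 := hF1 T
      have f2 := hF2 T
      rw [e] at f2
      push_cast
      split_ifs with hT1
      · rw [if_pos (by linarith)] at ih; linarith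
      · push Not at hT1
        split_ifs at ih with hT
        · have : 1 / ((T : ℝ) + 1) ≤ 1 / X := one_div_le_one_div_of_le hX hT1.le
          nlinarith
        · linarith
  refine key.trans ?_
  have h3 : 0 ≤ c₂ / X := by positivity
  split_ifs with h
  · nlinarith
  · have : 0 ≤ c₂ * (1 / ((T : ℝ) + 1)) := by positivity
    rw [mul_sub, mul_one_div]; linarith

lemma geom_diff (z : ℂ) (hz : ‖z‖ = 1) (M : ℕ) :
    ‖∑ m ∈ range M, (z ^ m - z⁻¹ ^ (m + 1))‖ ≤ min ((M : ℝ) ^ 2 * ‖z - 1‖) (4 / ‖z - 1‖) := by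
  have hz0 : z ≠ 0 := by intro h; simp [h] at hz
  have hzi : ‖z⁻¹‖ = 1 := by rw [norm_inv, hz, inv_one]
  refine le_min ?_ ?_
  · have h1 : ∀ m : ℕ, ‖z ^ m - 1‖ ≤ m * ‖z - 1‖ := by
      intro m
      induction m with
      | zero => simp
      | succ m ih =>
        have : z ^ (m + 1) - 1 = z ^ m * (z - 1) + (z ^ m - 1) := by ring
        rw [this]
        refine (norm_add_le _ _).trans ?_
        rw [norm_mul, norm_pow, hz]
        push_cast
        linarith [ih, one_pow (M := ℝ) m ▸ (one_mul ‖z - 1‖).le]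
    have h2 : ∀ m : ℕ, ‖z ^ m - z⁻¹ ^ (m + 1)‖ ≤ (2 * m + 1) * ‖z - 1‖ := by
      intro m
      have : z ^ m - z⁻¹ ^ (m + 1) = z⁻¹ ^ (m + 1) * (z ^ (2 * m + 1) - 1) := by
        rw [inv_pow]; field_simp; ring
      rw [this, norm_mul, norm_pow, hzi, one_pow, one_mul]
      exact_mod_cast h1 (2 * m + 1)
    refine (norm_sum_le _ _).trans ?_
    induction M with
    | zero => simp
    | succ M ih =>
      rw [Finset.sum_range_succ]
      have := h2 M
      push_cast
      nlinarith
  · by_cases h : z = 1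
    · subst h; simp
    · have hi : z⁻¹ ≠ 1 := by rwa [ne_eq, inv_eq_one]
      have e : ‖z⁻¹ - 1‖ = ‖z - 1‖ := by
        have : z⁻¹ - 1 = -(z⁻¹ * (z - 1)) := by field_simp; ring
        rw [this, norm_neg, norm_mul, hzi, one_mul]
      rw [Finset.sum_sub_distrib]
      refine (norm_sub_le _ _).trans ?_
      have h1 := geom_bound z hz h M
      have h2 : ‖∑ m ∈ range M, z⁻¹ ^ (m + 1)‖ ≤ 2 / ‖z - 1‖ := by
        have := geom_bound z⁻¹ hzi hi M
        rw [e] at this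
        simp only [pow_succ]
        rw [← Finset.sum_mul, norm_mul, hzi, mul_one]; exact this
      calc _ ≤ 2 / ‖z - 1‖ + 2 / ‖z - 1‖ := add_le_add h1 h2
        _ = _ := by ring

lemma per_mul (a : ℤ → ℂ) (q : ℕ) (z : ℂ) (hper : ∀ k : ℤ, a (k + q) = z * a k) (M : ℕ) (k : ℤ) :
    a (k + q * M) = z ^ M * a k := by
  induction M with
  | zero => simp
  | succ M ih =>
    have : k + (q : ℤ) * ((M + 1 : ℕ) : ℤ) = (k + q * M) + q := by push_cast; ring
    rw [this, hper, ih]; ring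

lemma block_sum (a : ℤ → ℂ) (q : ℕ) (z : ℂ) (hz : ‖z‖ = 1)
    (hper : ∀ k : ℤ, a (k + q) = z * a k) (M : ℕ) :
    ∑ k ∈ range (q * M), (a k - a (-((k : ℤ) + 1))) =
      (∑ m ∈ range M, (z ^ m - z⁻¹ ^ (m + 1))) * ∑ r ∈ range q, a r := by
  have hz0 : z ≠ 0 := by intro h; simp [h] at hz
  induction M with
  | zero => simp
  | succ M ih =>
    rw [mul_add, mul_one, Finset.sum_range_add, ih, Finset.sum_range_succ _ M, add_mul]
    congr 1
    rw [Finset.sum_sub_distrib, sub_mul]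
    congr 1
    · rw [Finset.mul_sum]
      refine Finset.sum_congr rfl fun r _ => ?_
      rw [← per_mul a q z hper]; congr 1; push_cast; ring
    · rw [Finset.mul_sum, ← Finset.sum_range_reflect]
      refine Finset.sum_congr rfl fun r hr => ?_
      have hr' : r < q := Finset.mem_range.mp hr
      have := per_mul a q z hper (M + 1) (-(((q * M + (q - 1 - r) : ℕ) : ℤ) + 1))
      have e : -(((q * M + (q - 1 - r) : ℕ) : ℤ) + 1) + q * ((M + 1 : ℕ) : ℤ) = r := by
        have : ((q - 1 - r : ℕ) : ℤ) = q - 1 - r := by omega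
        push_cast [this]; ring
      rw [e] at this
      rw [this, ← mul_assoc, inv_pow, inv_mul_cancel₀ (pow_ne_zero _ hz0), one_mul]

lemma bsum_bd (a : ℤ → ℂ) (ha : ∀ k, ‖a k‖ ≤ 1) (q : ℕ) (hq : 1 ≤ q) (z : ℂ) (hz : ‖z‖ = 1)
    (hper : ∀ k : ℤ, a (k + q) = z * a k) (K : ℕ) :
    ‖∑ k ∈ range K, (a ((k : ℤ) + 1) - a (-((k : ℤ) + 1)))‖ ≤
      ‖∑ r ∈ range q, a r‖ * min (((K : ℝ) / q) ^ 2 * ‖z - 1‖) (4 / ‖z - 1‖) + 2 * q := by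
  have h1 : ∑ k ∈ range K, (a ((k : ℤ) + 1) - a (-((k : ℤ) + 1))) =
      ∑ k ∈ range K, (a k - a (-((k : ℤ) + 1))) + (a K - a 0) := by
    rw [Finset.sum_sub_distrib, Finset.sum_sub_distrib]
    have := Finset.sum_range_sub (fun k : ℕ => a k) K
    rw [Finset.sum_sub_distrib] at this
    push_cast at this
    linear_combination this
  obtain ⟨M, r, hr, hK⟩ : ∃ M r : ℕ, r < q ∧ K = q * M + r :=
    ⟨K / q, K % q, Nat.mod_lt _ (by omega), (Nat.div_add_mod K q).symm⟩
  have hqR : (1 : ℝ) ≤ q := by exact_mod_cast hq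
  have hMK : (M : ℝ) ≤ K / q := by
    rw [le_div_iff₀ (by positivity)]
    rw [hK]; push_cast
    have : (0 : ℝ) ≤ r := by positivity
    linarith
  have h2 := geom_diff z hz M
  have h3 : ‖∑ k ∈ range K, (a k - a (-((k : ℤ) + 1)))‖ ≤
      ‖∑ r ∈ range q, a r‖ * min (((K : ℝ) / q) ^ 2 * ‖z - 1‖) (4 / ‖z - 1‖) + 2 * r := by
    rw [hK, Finset.sum_range_add, block_sum a q z hz hper, ← hK]
    refine (norm_add_le _ _).trans (add_le_add ?_ ?_)
    · rw [norm_mul, mul_comm]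
      gcongr
      refine h2.trans (min_le_min ?_ le_rfl)
      gcongr
    · refine (norm_sum_le _ _).trans ?_
      calc _ ≤ ∑ _i ∈ range r, (2 : ℝ) := Finset.sum_le_sum fun i _ =>
            (norm_sub_le _ _).trans ((add_le_add (ha _) (ha _)).trans (by norm_num))
        _ = _ := by simp; ring
  rw [h1]
  have h4 : ‖a K - a 0‖ ≤ 2 := (norm_sub_le _ _).trans (by linarith [ha K, ha 0])
  have h5 : (r : ℝ) + 1 ≤ q := by exact_mod_cast hr
  refine (norm_add_le _ _).trans ?_
  linarith

lemma far_conv (a : ℤ → ℂ) (ha : ∀ k, ‖a k‖ ≤ 1) (q : ℕ) (hq : 1 ≤ q) (z : ℂ) (hz : ‖z‖ = 1)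
    (hper : ∀ k : ℤ, a (k + q) = z * a k) : ∃ L : ℂ,
    Tendsto (fun K : ℕ => ∑ k ∈ range K, ((1 / ((k : ℝ) + 1) : ℝ) : ℂ) *
      (a ((k : ℤ) + 1) - a (-((k : ℤ) + 1)))) atTop (nhds L) := by
  have hanti : Antitone (fun k : ℕ => 1 / ((k : ℝ) + 1)) := by
    intro i j hij
    have : (i : ℝ) ≤ j := by exact_mod_cast hij
    apply one_div_le_one_div_of_le (by positivity); linarith
  have := hanti.cauchySeq_series_mul_of_tendsto_zero_of_bounded
    tendsto_one_div_add_atTop_nhds_zero_nat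
    (z := fun k : ℕ => a ((k : ℤ) + 1) - a (-((k : ℤ) + 1)))
    (b := ‖∑ r ∈ range q, a r‖ * (4 / ‖z - 1‖) + 2 * q) (fun K => by
      refine (bsum_bd a ha q hq z hz hper K).trans ?_
      gcongr
      exact min_le_right _ _)
  obtain ⟨L, hL⟩ := cauchySeq_tendsto_of_complete this
  refine ⟨L, ?_⟩
  simpa [Complex.real_smul] using hL

lemma far_bd (a : ℤ → ℂ) (ha : ∀ k, ‖a k‖ ≤ 1) (q : ℕ) (hq : 1 ≤ q) (z : ℂ) (hz : ‖z‖ = 1)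
    (hper : ∀ k : ℤ, a (k + q) = z * a k) (A B : ℕ) (hA : 1 ≤ A) :
    ‖∑ k ∈ range B, ((1 / (((A + k : ℕ) : ℝ) + 1) : ℝ) : ℂ) *
      (a (((A + k : ℕ) : ℤ) + 1) - a (-(((A + k : ℕ) : ℤ) + 1)))‖ ≤
    14 * (‖∑ r ∈ range q, a r‖ / q) + 8 * (q / A) := by
  set b : ℕ → ℂ := fun k => a ((k : ℤ) + 1) - a (-((k : ℤ) + 1)) with hb
  set G : ℝ := ‖∑ r ∈ range q, a r‖ with hG
  set η : ℝ := ‖z - 1‖ with hη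
  have hη0 : 0 ≤ η := norm_nonneg _
  have hG0 : 0 ≤ G := norm_nonneg _
  have hq0 : (0 : ℝ) < q := by exact_mod_cast hq
  have hA0 : (0 : ℝ) < A := by exact_mod_cast hA
  set β : ℕ → ℝ := fun K => G * min (((K : ℝ) / q) ^ 2 * η) (4 / η) + 2 * q with hβ
  have hbb : ∀ K, ‖∑ k ∈ range K, b k‖ ≤ β K := bsum_bd a ha q hq z hz hper
  have hmono : ∀ K L : ℕ, K ≤ L → β K ≤ β L := by
    intro K L h
    simp only [hβ]
    have : (K : ℝ) ≤ L := by exact_mod_cast h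
    gcongr
  have hS : ∀ k, ‖∑ i ∈ range k, b (A + i)‖ ≤ 2 * β (A + k) := by
    intro k
    have : ∑ i ∈ range k, b (A + i) = ∑ i ∈ range (A + k), b i - ∑ i ∈ range A, b i := by
      rw [Finset.sum_range_add]; ring
    rw [this]
    refine (norm_sub_le _ _).trans ?_
    linarith [hbb (A + k), hbb A, hmono A (A + k) (by omega)]
  set w : ℕ → ℝ := fun k => 1 / (((A + k : ℕ) : ℝ) + 1) with hw
  have hwd : ∀ k, w k - w (k + 1) = 1 / ((((A + k : ℕ) : ℝ) + 1) * (((A + k : ℕ) : ℝ) + 2)) := by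
    intro k; simp only [hw]; push_cast; field_simp; ring
  have hwd0 : ∀ k, 0 ≤ w k - w (k + 1) := by intro k; rw [hwd]; positivity
  have hw0 : ∀ k, 0 ≤ w k := by intro k; simp only [hw]; positivity
  set F : ℕ → ℝ := fun m => min ((((m + 1 : ℕ) : ℝ) / q) ^ 2 * η) (4 / η) *
    (1 / (((m : ℝ) + 1) * (m + 2))) with hF
  have hF0 : ∀ m, 0 ≤ F m := by intro m; simp only [hF]; positivity
  have hFs : ∀ T, ∑ m ∈ range T, F m ≤ 5 / q := by
    intro T
    rcases hη0.eq_or_lt with h | h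
    · have : ∀ m, F m = 0 := by intro m; simp only [hF, ← h]; simp
      simp only [this]; simp; positivity
    · refine (split_sum F (η / q ^ 2) (4 / η) (q / η) (by positivity) (by positivity)
        (by positivity) ?_ ?_ T).trans (le_of_eq ?_)
      · intro m
        simp only [hF]
        calc _ ≤ (((m + 1 : ℕ) : ℝ) / q) ^ 2 * η * (1 / (((m : ℝ) + 1) * (m + 1))) := by
              gcongr
              · exact min_le_left _ _
              · norm_num
          _ = _ := by push_cast; field_simp
      · intro m
        simp only [hF]
        rw [mul_one_div]
        gcongr
        exact min_le_right _ _
      · field_simp; norm_num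
  have hmain := abel_bd w (fun i => b (A + i)) B
  refine hmain.trans ?_
  have t1 : |w B| * ‖∑ k ∈ range B, b (A + k)‖ ≤ 4 * (G / q) + 4 * (q / A) := by
    rw [abs_of_nonneg (hw0 B)]
    have hmin : min ((((A + B : ℕ) : ℝ) / q) ^ 2 * η) (4 / η) ≤ 2 * (((A + B : ℕ) : ℝ) / q) := by
      set X := ((A + B : ℕ) : ℝ) / q
      have hX : 0 ≤ X := by positivity
      by_contra hcon
      push Not at hcon
      obtain ⟨c1, c2⟩ := lt_min_iff.mp hcon
      rcases hη0.eq_or_lt with h | h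
      · rw [← h] at c1; simp at c1; linarith
      · rw [lt_div_iff₀ h] at c2
        nlinarith
    have : β (A + B) ≤ G * (2 * (((A + B : ℕ) : ℝ) / q)) + 2 * q := by
      simp only [hβ]; gcongr
    calc w B * ‖∑ k ∈ range B, b (A + k)‖
        ≤ w B * (2 * (G * (2 * (((A + B : ℕ) : ℝ) / q)) + 2 * q)) :=
          mul_le_mul_of_nonneg_left ((hS B).trans (by linarith)) (hw0 B)
      _ = 4 * (G / q) * (((A + B : ℕ) : ℝ) * w B) + 4 * (q * w B) := by ring
      _ ≤ 4 * (G / q) * 1 + 4 * (q * (1 / A)) := by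
          have hAB : (A : ℝ) ≤ ((A + B : ℕ) : ℝ) := by exact_mod_cast Nat.le_add_right A B
          gcongr
          · simp only [hw]; rw [mul_one_div, div_le_one (by positivity)]; linarith
          · simp only [hw]; apply one_div_le_one_div_of_le hA0; linarith
      _ = _ := by ring
  have t2 : ∑ k ∈ range B, |w k - w (k + 1)| * ‖∑ i ∈ range (k + 1), b (A + i)‖ ≤
      10 * (G / q) + 4 * (q / A) := by
    calc _ ≤ ∑ k ∈ range B, (2 * G * F (A + k) + 4 * q * (w k - w (k + 1))) := by
          refine Finset.sum_le_sum fun k _ => ?_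
          rw [abs_of_nonneg (hwd0 k)]
          refine (mul_le_mul_of_nonneg_left (hS (k + 1)) (hwd0 k)).trans (le_of_eq ?_)
          have e : 2 * G * F (A + k) = 2 * G * min ((((A + (k + 1) : ℕ) : ℝ) / q) ^ 2 * η) (4 / η) * (w k - w (k + 1)) := by
            rw [hwd]; simp only [hF, add_assoc]; ring
          rw [e]; simp only [hβ]; ring
      _ = 2 * G * ∑ k ∈ range B, F (A + k) + 4 * q * (w 0 - w B) := by
          rw [Finset.sum_add_distrib, ← Finset.mul_sum, ← Finset.mul_sum, Finset.sum_range_sub']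
      _ ≤ 2 * G * (5 / q) + 4 * q * (1 / A) := by
          gcongr
          · refine le_trans ?_ (hFs (A + B))
            rw [Finset.sum_range_add]
            have : 0 ≤ ∑ x ∈ range A, F x := Finset.sum_nonneg fun _ _ => hF0 _
            linarith
          · have : w 0 ≤ 1 / A := by
              simp only [hw]; apply one_div_le_one_div_of_le hA0; push_cast; linarith
            linarith [hw0 B]
      _ = _ := by ring
  linarith

noncomputable def aa (n : ℕ) (t y : ℝ) (k : ℤ) : ℂ := ee (t * (k : ℝ) ^ n + y * (k : ℝ))

lemma aa_poly (j : ℕ) (u : ℤ) (q : ℕ) (y c : ℝ) (s : ℤ) :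
    PolyClass (j + 1) ((j + 2).factorial * (((s ^ (j + 2) * u : ℤ) : ℝ) / q))
      (fun k => (u / q : ℝ) * (s * k + c) ^ (j + 2) + y * (s * k + c)) := by
  set l : Polynomial ℝ := Polynomial.C (s : ℝ) * Polynomial.X + Polynomial.C c with hl
  have hl1 : l.natDegree ≤ 1 := Polynomial.natDegree_linear_le
  set p : Polynomial ℝ := Polynomial.C (u / q : ℝ) * l ^ (j + 2) + Polynomial.C y * l with hp
  have hpd : p.natDegree ≤ j + 1 + 1 := by
    refine (Polynomial.natDegree_add_le _ _).trans (max_le ?_ ?_)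
    · refine (Polynomial.natDegree_C_mul_le _ _).trans ?_
      refine (Polynomial.natDegree_pow_le_of_le (j + 2) hl1).trans (by omega)
    · refine (Polynomial.natDegree_C_mul_le _ _).trans (by omega)
  have hc : p.coeff (j + 1 + 1) = ((s ^ (j + 2) * u : ℤ) : ℝ) / q := by
    have h1 := Polynomial.coeff_pow_of_natDegree_le (m := j + 2) hl1
    rw [mul_one] at h1
    have h2 : l.coeff 1 = s := by rw [hl]; simp
    have h3 : l.coeff (j + 1 + 1) = 0 := Polynomial.coeff_eq_zero_of_natDegree_lt (by omega)
    rw [hp, Polynomial.coeff_add, Polynomial.coeff_C_mul, Polynomial.coeff_C_mul, h3, h1, h2]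
    push_cast; ring
  have := polyClass_poly (j + 1) p hpd
  rw [hc] at this
  convert this using 2 with k
  simp [hp, hl]

lemma aa_per (n : ℕ) (u : ℤ) (q : ℕ) (hq : 1 ≤ q) (y : ℝ) (k : ℤ) :
    aa n (u / q) y (k + q) = ee (y * q) * aa n (u / q) y k := by
  have hq0 : (q : ℝ) ≠ 0 := by positivity
  obtain ⟨c, hc⟩ : (q : ℤ) ∣ (k + q) ^ n - k ^ n := by
    have := sub_dvd_pow_sub_pow (k + q : ℤ) k n
    simpa using this
  have hc' : ((k : ℝ) + q) ^ n = k ^ n + q * c := by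
    have : ((k + q) ^ n : ℤ) = k ^ n + q * c := by linarith
    exact_mod_cast this
  unfold aa
  rw [← ee_add, ← ee_add_int (y * q + ((u / q : ℝ) * (k : ℝ) ^ n + y * k)) (u * c)]
  congr 1
  push_cast
  rw [hc']
  field_simp
  ring

lemma norm_aa (n : ℕ) (t y : ℝ) (k : ℤ) : ‖aa n t y k‖ = 1 := norm_ee _

lemma R_facts (j : ℕ) (α : ℝ) (hα0 : 0 < α) (hα2 : α * ((j : ℝ) + 1) < 1) (q : ℕ) (hq : 1 ≤ q)
    (t : ℝ) (ht0 : 1 / (q : ℝ) ≤ t) (ht1 : t ≤ 1) :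
    t ^ α ≤ q * t ^ (α * (j + 2)) ∧ 1 / (q : ℝ) ≤ q * t ^ (α * (j + 2)) ∧ 1 / (q : ℝ) ≤ t ^ α := by
  have hq0 : (0 : ℝ) < q := by exact_mod_cast hq
  have htp : 0 < t := lt_of_lt_of_le (by positivity) ht0
  have hj : (0 : ℝ) ≤ j := by positivity
  have hqt : 1 ≤ q * t := by rwa [div_le_iff₀' hq0] at ht0
  have hα1 : α ≤ 1 := by nlinarith
  have h1 : t ≤ t ^ (α * (j + 1)) := by
    conv_lhs => rw [← Real.rpow_one t]
    exact Real.rpow_le_rpow_of_exponent_ge htp ht1 hα2.le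
  have h2 : t ≤ t ^ α := by
    conv_lhs => rw [← Real.rpow_one t]
    exact Real.rpow_le_rpow_of_exponent_ge htp ht1 hα1
  have e : t ^ (α * (j + 2)) = t ^ (α * (j + 1)) * t ^ α := by
    rw [← Real.rpow_add htp]; ring_nf
  have h3 : t ^ α ≤ q * t ^ (α * (j + 2)) := by
    rw [e, ← mul_assoc]
    apply le_mul_of_one_le_left (by positivity)
    exact hqt.trans (by gcongr)
  have h4 := ht0.trans h2
  exact ⟨h3, h4.trans h3, h4⟩

lemma R_bound (j : ℕ) (α : ℝ) (hα0 : 0 < α) (hα2 : α * ((j : ℝ) + 1) < 1) (q : ℕ) (hq : 1 ≤ q)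
    (t : ℝ) (ht0 : 1 / (q : ℝ) ≤ t) (ht1 : t ≤ 1) (s : ℕ) (hs : 1 ≤ s)
    (hst : 1 / 2 < ((s : ℝ) + 1) * t ^ α) :
    1 / (s : ℝ) + 1 / q + q / (s : ℝ) ^ (j + 2) ≤ 4 ^ (j + 3) * (q * t ^ (α * (j + 2))) := by
  obtain ⟨h1, h2, _⟩ := R_facts j α hα0 hα2 q hq t ht0 ht1
  have hq0 : (0 : ℝ) < q := by exact_mod_cast hq
  have htp : 0 < t := lt_of_lt_of_le (by positivity) ht0
  have hs0 : (1 : ℝ) ≤ s := by exact_mod_cast hs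
  have ha : 0 < t ^ α := by positivity
  have h3 : 1 / (s : ℝ) ≤ 4 * t ^ α := by
    rw [div_le_iff₀ (by positivity)]
    nlinarith
  have h4 : q / (s : ℝ) ^ (j + 2) ≤ 4 ^ (j + 2) * (q * t ^ (α * (j + 2))) := by
    have : (1 / (s : ℝ)) ^ (j + 2) ≤ (4 * t ^ α) ^ (j + 2) := by gcongr
    have e : (t ^ α) ^ (j + 2) = t ^ (α * (j + 2)) := by
      rw [← Real.rpow_natCast, ← Real.rpow_mul htp.le]; push_cast; rfl
    rw [mul_pow, e] at this
    calc q / (s : ℝ) ^ (j + 2) = q * (1 / (s : ℝ)) ^ (j + 2) := by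
          rw [one_div, inv_pow]; rfl
      _ ≤ q * (4 ^ (j + 2) * t ^ (α * (j + 2))) := by gcongr
      _ = _ := by ring
  set P := q * t ^ (α * (j + 2))
  have hP : 0 ≤ P := by positivity
  have h5 : (4 : ℝ) ^ 2 ≤ 4 ^ (j + 2) := pow_le_pow_right₀ (by norm_num) (by omega)
  have h6 : (4 : ℝ) ^ (j + 3) = 4 * 4 ^ (j + 2) := by ring
  rw [h6]
  nlinarith

lemma near_bd (j : ℕ) (α : ℝ) (hα0 : 0 < α) (hα2 : α * ((j : ℝ) + 1) < 1) (ε : ℝ) (hε : 0 < ε)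
    (B : ℝ) (hB : 0 < B) : ∃ C : ℝ, 0 < C ∧ ∀ (u : ℤ) (q : ℕ), 1 ≤ q → Int.gcd u q = 1 →
    1 / (q : ℝ) ≤ (u : ℝ) / q → (u : ℝ) / q ≤ 1 → ∀ (y : ℝ) (s : ℤ), (s = 1 ∨ s = -1) →
    ∀ w : ℕ → ℝ, (∀ k : ℕ, 1 ≤ k → |w k| ≤ B / k) →
      (∀ k : ℕ, 1 ≤ k → |w k - w (k + 1)| ≤ B / (k : ℝ) ^ 2) →
      (∀ k : ℕ, (k : ℝ) * ((u : ℝ) / q) ^ α ≤ 1 / 2 → w k = 0) →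
    ‖∑ k ∈ range (q ^ 2), (w (k + 1) : ℂ) * aa (j + 2) (u / q) y (s * ((k : ℤ) + 1))‖ ≤
      C * (q * ((u : ℝ) / q) ^ (α * (j + 2))) ^ ((1 : ℝ) / 2 ^ (j + 1)) * (q : ℝ) ^ ε := by
  set δ : ℝ := ε / 5 with hδ
  have hδ0 : 0 < δ := by positivity
  obtain ⟨Cw, hCw, hW⟩ := weyl_ineq j δ hδ0
  set cR : ℝ := ((4 : ℝ) ^ (j + 3)) ^ ((1 : ℝ) / 2 ^ (j + 1)) with hcR
  have hcR0 : 0 < cR := by positivity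
  refine ⟨B * Cw * cR * (2 + 1 / δ), by positivity, ?_⟩
  intro u q hq hu ht0 ht1 y s hs w hw1 hw2 hw3
  have hq1 : (1 : ℝ) ≤ q := by exact_mod_cast hq
  set t : ℝ := (u : ℝ) / q with ht
  have htp : 0 < t := lt_of_lt_of_le (by positivity) ht0
  set P : ℝ := q * t ^ (α * (j + 2)) with hP
  have hP0 : 0 < P := by positivity
  set p : ℝ := (1 : ℝ) / 2 ^ (j + 1) with hp
  have hsu : Int.gcd (s ^ (j + 2) * u) q = 1 := by
    have : IsUnit (s ^ (j + 2)) := by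
      rcases hs with h | h <;> rw [h] <;> simp
    rw [← Int.isCoprime_iff_gcd_eq_one] at hu ⊢
    exact (isCoprime_mul_unit_left_left this u q).mpr hu
  set Y : ℝ := Cw * ((q : ℝ) ^ 3) ^ δ * (cR * P ^ p) with hY
  have hY0 : 0 < Y := by positivity
  set S : ℕ → ℂ := fun m => ∑ i ∈ range m, aa (j + 2) t y (s * ((i : ℤ) + 1)) with hS
  have hSb : ∀ m : ℕ, 1 ≤ m → m ≤ q ^ 2 → 1 / 2 < ((m : ℝ) + 1) * t ^ α → ‖S m‖ ≤ m * Y := by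
    intro m hm hmM hmt
    have hR := R_bound j α hα0 hα2 q hq t ht0 ht1 m hm hmt
    have h1 := hW (s ^ (j + 2) * u) q hq hsu _ (aa_poly j u q y s s) m hm _ hR
    rw [Real.mul_rpow (x := (4 : ℝ) ^ (j + 3)) (y := q * t ^ (α * (j + 2))) (by positivity)
      (by positivity)] at h1
    have e : ∑ k ∈ range m, ee ((u / q : ℝ) * (s * k + s) ^ (j + 2) + y * (s * k + s)) = S m := by
      refine Finset.sum_congr rfl fun k _ => ?_
      unfold aa
      push_cast
      rw [show (s * ((k : ℝ) + 1)) = s * k + s by ring]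
    rw [e] at h1
    refine h1.trans ?_
    calc Cw * m * ((m : ℝ) * q) ^ δ * (cR * P ^ p)
        ≤ Cw * m * ((q : ℝ) ^ 3) ^ δ * (cR * P ^ p) := by
          gcongr
          have : (m : ℝ) ≤ (q : ℝ) ^ 2 := by exact_mod_cast hmM
          calc (m : ℝ) * q ≤ (q : ℝ) ^ 2 * q := by gcongr
            _ = _ := by ring
      _ = _ := by rw [hY]; ring
  have hM1 : 1 ≤ q ^ 2 := Nat.one_le_pow _ _ hq
  have hab := abel_bd (fun k => w (k + 1)) (fun k => aa (j + 2) t y (s * ((k : ℤ) + 1))) (q ^ 2)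
  refine hab.trans ?_
  have t1 : |w (q ^ 2 + 1)| * ‖S (q ^ 2)‖ ≤ B * Y := by
    by_cases hc : 1 / 2 < (((q ^ 2 : ℕ) : ℝ) + 1) * t ^ α
    · have a1 := hSb (q ^ 2) hM1 le_rfl hc
      have a2 := hw1 (q ^ 2 + 1) (by omega)
      have hMp : (0 : ℝ) < ((q ^ 2 : ℕ) : ℝ) := by exact_mod_cast hM1
      calc _ ≤ B / ((q ^ 2 + 1 : ℕ) : ℝ) * (((q ^ 2 : ℕ) : ℝ) * Y) := by gcongr
        _ = B * Y * (((q ^ 2 : ℕ) : ℝ) / (((q ^ 2 : ℕ) : ℝ) + 1)) := by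
            rw [Nat.cast_add, Nat.cast_one]; ring
        _ ≤ B * Y * 1 := by
            gcongr
            rw [div_le_one (by positivity)]; linarith
        _ = _ := mul_one _
    · rw [hw3 (q ^ 2 + 1) (by push Not at hc; rw [Nat.cast_add, Nat.cast_one]; exact hc)]
      simp; positivity
  have t2 : ∑ k ∈ range (q ^ 2), |w (k + 1) - w (k + 1 + 1)| * ‖S (k + 1)‖ ≤
      B * Y * ((1 + 1 / δ) * ((q : ℝ) ^ 2) ^ δ) := by
    calc _ ≤ ∑ k ∈ range (q ^ 2), B * Y * (1 / ((k : ℝ) + 1)) := by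
          refine Finset.sum_le_sum fun k hk => ?_
          have hk' := Finset.mem_range.mp hk
          by_cases hc : 1 / 2 < (((k + 1 : ℕ) : ℝ) + 1) * t ^ α
          · have a1 := hSb (k + 1) (by omega) (by omega) hc
            have a2 := hw2 (k + 1) (by omega)
            calc _ ≤ B / ((k + 1 : ℕ) : ℝ) ^ 2 * (((k + 1 : ℕ) : ℝ) * Y) := by gcongr
              _ = _ := by push_cast; field_simp
          · push Not at hc
            have b1 : w (k + 1 + 1) = 0 := hw3 _ (by rw [Nat.cast_add (k + 1), Nat.cast_one]; exact hc)
            have b2 : w (k + 1) = 0 := hw3 _ (by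
              have : 0 < t ^ α := by positivity
              nlinarith)
            rw [b1, b2]; simp; positivity
      _ = B * Y * ∑ k ∈ range (q ^ 2), 1 / ((k : ℝ) + 1) := by rw [Finset.mul_sum]
      _ ≤ _ := by
          gcongr
          refine (harm (q ^ 2)).trans ((log_bd δ hδ0 (q ^ 2) hM1).trans ?_)
          push_cast
          exact le_rfl
  refine (add_le_add t1 t2).trans ?_
  have e2 : 1 ≤ ((q : ℝ) ^ 2) ^ δ := Real.one_le_rpow (one_le_pow₀ hq1) hδ0.le
  have e3 : ((q : ℝ) ^ 3) ^ δ * ((q : ℝ) ^ 2) ^ δ = (q : ℝ) ^ ε := by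
    rw [← Real.mul_rpow (by positivity) (by positivity), ← pow_add, ← Real.rpow_natCast,
      ← Real.rpow_mul (by positivity)]
    congr 1; rw [hδ]; push_cast; ring
  calc B * Y + B * Y * ((1 + 1 / δ) * ((q : ℝ) ^ 2) ^ δ)
      ≤ B * Y * (((q : ℝ) ^ 2) ^ δ) + B * Y * ((1 + 1 / δ) * ((q : ℝ) ^ 2) ^ δ) :=
        add_le_add (le_mul_of_one_le_right (by positivity) e2) le_rfl
    _ = B * Cw * cR * (2 + 1 / δ) * P ^ p * (((q : ℝ) ^ 3) ^ δ * ((q : ℝ) ^ 2) ^ δ) := by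
        rw [hY]; ring
    _ = _ := by rw [e3]

lemma G_bd (j : ℕ) (α : ℝ) (hα0 : 0 < α) (hα2 : α * ((j : ℝ) + 1) < 1) (ε : ℝ) (hε : 0 < ε) :
    ∃ C : ℝ, 0 < C ∧ ∀ (u : ℤ) (q : ℕ), 1 ≤ q → Int.gcd u q = 1 →
    1 / (q : ℝ) ≤ (u : ℝ) / q → (u : ℝ) / q ≤ 1 → ∀ (y : ℝ),
    ‖∑ r ∈ range q, aa (j + 2) (u / q) y r‖ / q ≤
      C * (q * ((u : ℝ) / q) ^ (α * (j + 2))) ^ ((1 : ℝ) / 2 ^ (j + 1)) * (q : ℝ) ^ ε := by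
  obtain ⟨Cw, hCw, hW⟩ := weyl_ineq j (ε / 2) (by positivity)
  refine ⟨Cw * (3 : ℝ) ^ ((1 : ℝ) / 2 ^ (j + 1)), by positivity, ?_⟩
  intro u q hq hu ht0 ht1 y
  have hq1 : (1 : ℝ) ≤ q := by exact_mod_cast hq
  set t : ℝ := (u : ℝ) / q with ht
  have htp : 0 < t := lt_of_lt_of_le (by positivity) ht0
  obtain ⟨-, h2, -⟩ := R_facts j α hα0 hα2 q hq t ht0 ht1
  set P : ℝ := q * t ^ (α * (j + 2)) with hP
  have hP0 : 0 < P := by positivity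
  have hR : 1 / (q : ℝ) + 1 / q + q / (q : ℝ) ^ (j + 2) ≤ 3 * P := by
    have : q / (q : ℝ) ^ (j + 2) ≤ 1 / q := by
      rw [div_le_div_iff₀ (by positivity) (by positivity)]
      have : (q : ℝ) ^ 2 ≤ (q : ℝ) ^ (j + 2) := pow_le_pow_right₀ hq1 (by omega)
      nlinarith
    linarith
  have h1 := hW (1 ^ (j + 2) * u) q hq (by simpa using hu) _ (aa_poly j u q y 0 1) q hq _ hR
  rw [Real.mul_rpow (x := (3 : ℝ)) (y := P) (by positivity) (by positivity)] at h1
  have e : ∑ k ∈ range q, ee ((u / q : ℝ) * (((1 : ℤ) : ℝ) * k + 0) ^ (j + 2) +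
      y * (((1 : ℤ) : ℝ) * k + 0)) = ∑ r ∈ range q, aa (j + 2) t y r := by
    refine Finset.sum_congr rfl fun k _ => ?_
    unfold aa
    push_cast
    simp [ht]
  rw [e] at h1
  have e3 : ((q : ℝ) * q) ^ (ε / 2) = (q : ℝ) ^ ε := by
    rw [← pow_two, ← Real.rpow_natCast, ← Real.rpow_mul (by positivity)]
    congr 1; push_cast; ring
  rw [div_le_iff₀ (by positivity)]
  refine h1.trans (le_of_eq ?_)
  rw [e3]; ring

lemma weight_bd (ψ : ℝ → ℝ) (Lp : ℝ) (hLp : 0 ≤ Lp) (hlip : ∀ x y, |ψ x - ψ y| ≤ Lp * |x - y|)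
    (h1 : ∀ x, |x| ≤ 1 / 2 → ψ x = 1) (h2 : ∀ x, 2 ≤ |x| → ψ x = 0) (d : ℝ) (hd : 0 < d) :
    (∀ k : ℕ, 1 ≤ k → |(1 - ψ (k * d)) / k| ≤ (4 * Lp + 1) / k) ∧
    (∀ k : ℕ, 1 ≤ k → |(1 - ψ (k * d)) / k - (1 - ψ ((k + 1 : ℕ) * d)) / (k + 1 : ℕ)| ≤
      (4 * Lp + 1) / (k : ℝ) ^ 2) ∧
    (∀ k : ℕ, (k : ℝ) * d ≤ 1 / 2 → (1 - ψ (k * d)) / k = 0) := by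
  have hv : ∀ x, |1 - ψ x| ≤ 2 * Lp + 1 := by
    intro x
    by_cases hx : 2 ≤ |x|
    · rw [h2 x hx]; simp; linarith
    · push Not at hx
      have := hlip 0 x
      rw [h1 0 (by norm_num)] at this
      simp at this
      nlinarith
  refine ⟨?_, ?_, ?_⟩
  · intro k hk
    have hk0 : (1 : ℝ) ≤ k := by exact_mod_cast hk
    rw [abs_div, abs_of_pos (a := (k : ℝ)) (by positivity)]
    gcongr
    linarith [hv (k * d)]
  · intro k hk
    have hk0 : (1 : ℝ) ≤ k := by exact_mod_cast hk
    push_cast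
    have hd2 : |ψ (((k : ℝ) + 1) * d) - ψ (k * d)| ≤ 2 * Lp / k := by
      by_cases hx : 2 ≤ k * d
      · rw [h2 (k * d) (by rw [abs_of_nonneg (by positivity)]; exact hx),
          h2 ((k + 1) * d) (by rw [abs_of_nonneg (by positivity)]; nlinarith)]
        simp; positivity
      · push Not at hx
        refine (hlip _ _).trans ?_
        rw [show ((k : ℝ) + 1) * d - k * d = d by ring, abs_of_pos hd, le_div_iff₀ (by positivity)]
        nlinarith
    have e : (1 - ψ (k * d)) / k - (1 - ψ (((k : ℝ) + 1) * d)) / ((k : ℝ) + 1) =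
        (1 - ψ (k * d)) / (k * (k + 1)) + (ψ (((k : ℝ) + 1) * d) - ψ (k * d)) / (k + 1) := by
      field_simp; ring
    rw [e]
    refine (abs_add_le _ _).trans ?_
    rw [abs_div, abs_div, abs_of_pos (a := (k : ℝ) * (k + 1)) (by positivity),
      abs_of_pos (a := (k : ℝ) + 1) (by positivity)]
    calc _ ≤ (2 * Lp + 1) / (k * k) + (2 * Lp / k) / k := by
          have := hv (k * d)
          gcongr <;> linarith
      _ = _ := by field_simp; ring
  · intro k hk
    rw [h1 _ (by rw [abs_of_nonneg (by positivity)]; exact hk)]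
    simp

lemma Icc_sum (f : ℤ → ℂ) (K : ℕ) : ∑ k ∈ Finset.Icc (-(K : ℤ)) K, f k =
    f 0 + ∑ k ∈ range K, (f ((k : ℤ) + 1) + f (-((k : ℤ) + 1))) := by
  induction K with
  | zero => simp
  | succ K ih =>
    have e : Finset.Icc (-((K + 1 : ℕ) : ℤ)) ((K + 1 : ℕ) : ℤ) =
        insert ((K : ℤ) + 1) (insert (-((K : ℤ) + 1)) (Finset.Icc (-(K : ℤ)) K)) := by
      ext a; simp only [Finset.mem_insert, Finset.mem_Icc]; push_cast; omega
    rw [e, Finset.sum_insert, Finset.sum_insert, ih, Finset.sum_range_succ]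
    · ring
    · simp only [Finset.mem_Icc]; omega
    · simp only [Finset.mem_insert, Finset.mem_Icc]; omega

lemma phi_lip (φ : ℝ → ℝ) (hφ : GoodPhi φ) :
    ∃ Lp : ℝ, 0 ≤ Lp ∧ ∀ x y, |φ x - φ y| ≤ Lp * |x - y| := by
  have hc : HasCompactSupport φ := by
    refine HasCompactSupport.intro (isCompact_Icc (a := (-2 : ℝ)) (b := 2)) fun x hx => hφ.2.2.1 x ?_
    by_contra h
    push Not at h
    exact hx ⟨(abs_lt.mp h).1.le, (abs_lt.mp h).2.le⟩
  obtain ⟨C, hC⟩ := ContDiff.lipschitzWith_of_hasCompactSupport hc hφ.1 (by simp)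
  refine ⟨C, C.2, fun x y => ?_⟩
  have := hC.dist_le_mul x y
  rwa [Real.dist_eq, Real.dist_eq] at this

lemma E_main (j : ℕ) (α : ℝ) (hα0 : 0 < α) (hα2 : α * ((j : ℝ) + 1) < 1) (ε : ℝ) (hε : 0 < ε)
    (φ : ℝ → ℝ) (hφ : GoodPhi φ) :
    ∃ C : ℝ, 0 < C ∧ ∀ (u : ℤ) (q : ℕ), 2 ≤ q → Int.gcd u q = 1 →
    1 / (q : ℝ) ≤ (u : ℝ) / q → (u : ℝ) / q ≤ 1 → ∀ (y : ℝ), ∃ L : ℂ,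
    Tendsto (fun K : ℕ => ∑ k ∈ Finset.Icc (-(K : ℤ)) K,
      (((1 - φ ((k : ℝ) * ((u : ℝ) / q) ^ α)) / (k : ℝ) : ℝ) : ℂ) * aa (j + 2) (u / q) y k)
      atTop (nhds L) ∧
    ‖L‖ ≤ C * (q * ((u : ℝ) / q) ^ (α * (j + 2))) ^ ((1 : ℝ) / 2 ^ (j + 1)) * (q : ℝ) ^ ε := by
  obtain ⟨Lp, hLp, hlip⟩ := phi_lip φ hφ
  obtain ⟨-, hp1, hp2, -⟩ := hφ
  obtain ⟨C1, hC1, hN⟩ := near_bd j α hα0 hα2 ε hε (4 * Lp + 1) (by positivity)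
  obtain ⟨C2, hC2, hG⟩ := G_bd j α hα0 hα2 ε hε
  refine ⟨2 * C1 + 14 * C2 + 8, by positivity, ?_⟩
  intro u q hq2 hu ht0 ht1 y
  have hq : 1 ≤ q := by omega
  have hq1 : (2 : ℝ) ≤ q := by exact_mod_cast hq2
  have hN1 := hN u q hq hu ht0 ht1 y 1 (Or.inl rfl)
  have hN2 := hN u q hq hu ht0 ht1 y (-1) (Or.inr rfl)
  have hG1 := hG u q hq hu ht0 ht1 y
  have hper := aa_per (j + 2) u q hq y
  set t : ℝ := (u : ℝ) / q with ht
  have htp : 0 < t := lt_of_lt_of_le (by positivity) ht0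
  obtain ⟨-, h2, h3⟩ := R_facts j α hα0 hα2 q hq t ht0 ht1
  set P : ℝ := q * t ^ (α * (j + 2)) with hP
  have hP0 : 0 < P := by positivity
  set p : ℝ := (1 : ℝ) / 2 ^ (j + 1) with hp
  set d : ℝ := t ^ α with hd
  have hd0 : 0 < d := by positivity
  have hp0 : 0 < p := by positivity
  have hpl : p ≤ 1 := by
    rw [hp, div_le_one (by positivity)]; exact one_le_pow₀ (by norm_num)
  obtain ⟨a1, a2, a3⟩ := weight_bd φ Lp hLp hlip hp1 hp2 d hd0
  obtain ⟨b1, b2, b3⟩ := weight_bd (fun x => φ (-x)) Lp hLp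
    (fun x y => (hlip (-x) (-y)).trans (by rw [show -x - -y = -(x - y) by ring, abs_neg]))
    (fun x hx => hp1 _ (by rwa [abs_neg])) (fun x hx => hp2 _ (by rwa [abs_neg])) d hd0
  have n1 := hN1 (fun k : ℕ => (1 - φ (k * d)) / k) a1 a2 a3
  have n2 := hN2 (fun k : ℕ => (1 - φ (-(k * d))) / k) b1 b2 b3
  set f : ℤ → ℂ := fun k => (((1 - φ ((k : ℝ) * d)) / (k : ℝ) : ℝ) : ℂ) * aa (j + 2) t y k with hf
  set a : ℤ → ℂ := aa (j + 2) t y with ha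
  have ha1 : ∀ k, ‖a k‖ ≤ 1 := fun k => (norm_aa _ _ _ k).le
  have hz : ‖ee (y * q)‖ = 1 := norm_ee _
  obtain ⟨L0, hL0⟩ := far_conv a ha1 q hq _ hz hper
  have hfb := fun m => far_bd a ha1 q hq _ hz hper (q ^ 2) m (Nat.one_le_pow _ _ hq)
  set g : ℕ → ℂ := fun k => ((1 / ((k : ℝ) + 1) : ℝ) : ℂ) * (a ((k : ℤ) + 1) - a (-((k : ℤ) + 1)))
    with hg
  set h : ℕ → ℂ := fun k => f ((k : ℤ) + 1) + f (-((k : ℤ) + 1)) with hh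
  have hf0 : f 0 = 0 := by simp [hf]
  have htail : ∀ k : ℕ, h (q ^ 2 + k) = g (q ^ 2 + k) := by
    intro k
    have key : 2 ≤ (((q ^ 2 + k : ℕ) : ℝ) + 1) * d := by
      have : (q : ℝ) * d ≥ 1 := by rwa [ge_iff_le, ← div_le_iff₀' (by positivity)]
      push_cast
      nlinarith [(Nat.cast_nonneg k : (0 : ℝ) ≤ k)]
    simp only [hh, hg, hf]
    push_cast at key ⊢
    rw [hp2 _ (by rw [abs_of_nonneg (by positivity)]; exact key),
      hp2 (-((q : ℝ) ^ 2 + k + 1) * d) (by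
        rw [neg_mul, abs_neg, abs_of_nonneg (by positivity)]; exact key)]
    rw [div_neg]
    push_cast
    ring
  have hgT : Tendsto (fun m => ∑ k ∈ range m, g (q ^ 2 + k)) atTop
      (nhds (L0 - ∑ k ∈ range (q ^ 2), g k)) := by
    have h1 := (tendsto_add_atTop_iff_nat (q ^ 2)).mpr hL0
    have h2 := h1.sub_const (∑ k ∈ range (q ^ 2), g k)
    refine h2.congr fun m => ?_
    rw [add_comm m, Finset.sum_range_add]
    ring
  refine ⟨∑ k ∈ range (q ^ 2), h k + (L0 - ∑ k ∈ range (q ^ 2), g k), ?_, ?_⟩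
  · rw [← tendsto_add_atTop_iff_nat (q ^ 2)]
    refine (hgT.const_add (∑ k ∈ range (q ^ 2), h k)).congr fun m => ?_
    rw [Icc_sum f, hf0, zero_add, add_comm m, Finset.sum_range_add]
    congr 1
    exact Finset.sum_congr rfl fun k _ => (htail k).symm
  · have hT : ‖L0 - ∑ k ∈ range (q ^ 2), g k‖ ≤
        14 * (‖∑ r ∈ range q, a r‖ / q) + 8 * (q / ((q ^ 2 : ℕ) : ℝ)) :=
      le_of_tendsto hgT.norm (Eventually.of_forall fun m => hfb m)
    have hHn : ‖∑ k ∈ range (q ^ 2), h k‖ ≤ 2 * (C1 * P ^ p * (q : ℝ) ^ ε) := by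
      have e : ∑ k ∈ range (q ^ 2), h k =
          ∑ k ∈ range (q ^ 2), (((1 - φ ((k + 1 : ℕ) * d)) / (k + 1 : ℕ) : ℝ) : ℂ) *
            a (1 * ((k : ℤ) + 1)) -
          ∑ k ∈ range (q ^ 2), (((1 - φ (-((k + 1 : ℕ) * d))) / (k + 1 : ℕ) : ℝ) : ℂ) *
            a (-1 * ((k : ℤ) + 1)) := by
        rw [← Finset.sum_sub_distrib]
        refine Finset.sum_congr rfl fun k _ => ?_
        simp only [hh, hf]
        rw [one_mul, neg_one_mul]
        push_cast
        rw [neg_mul, div_neg]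
        ring
      rw [e]
      refine (norm_sub_le _ _).trans ?_
      linarith
    have hqe : 1 ≤ (q : ℝ) ^ ε := Real.one_le_rpow (by linarith) hε.le
    have hlast : q / ((q ^ 2 : ℕ) : ℝ) ≤ P ^ p * (q : ℝ) ^ ε := by
      have e1 : q / ((q ^ 2 : ℕ) : ℝ) = 1 / q := by push_cast; field_simp
      rw [e1]
      have e2 : 1 / (q : ℝ) ≤ (1 / (q : ℝ)) ^ p := by
        conv_lhs => rw [← Real.rpow_one (1 / (q : ℝ))]
        refine Real.rpow_le_rpow_of_exponent_ge (by positivity) ?_ hpl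
        rw [div_le_one (by positivity)]; linarith
      calc 1 / (q : ℝ) ≤ (1 / (q : ℝ)) ^ p := e2
        _ ≤ P ^ p := by gcongr
        _ ≤ _ := le_mul_of_one_le_right (by positivity) hqe
    refine (norm_add_le _ _).trans ?_
    calc _ ≤ 2 * (C1 * P ^ p * (q : ℝ) ^ ε) +
          (14 * (C2 * P ^ p * (q : ℝ) ^ ε) + 8 * (P ^ p * (q : ℝ) ^ ε)) := by linarith
      _ = _ := by ring

lemma sin_ee (θ : ℝ) : ((Real.sin (2 * Real.pi * θ) : ℝ) : ℂ) =
    (ee θ - ee (-θ)) / (2 * Complex.I) := by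
  unfold ee
  push_cast
  rw [Complex.sin, show -(2 * (Real.pi : ℂ) * θ) * Complex.I = 2 * Real.pi * Complex.I * -θ by ring,
    show (2 * (Real.pi : ℂ) * θ) * Complex.I = 2 * Real.pi * Complex.I * θ by ring]
  have := Complex.I_ne_zero
  have h2 := Complex.I_sq
  field_simp
  rw [h2]; ring

lemma term_id (n : ℕ) (γ t x c : ℝ) (k : ℤ) :
    Complex.ofReal (Real.sin (2 * Real.pi * γ * (k : ℝ)) / (Real.pi * (k : ℝ))) *
        ee (t * (k : ℝ) ^ n + x * (k : ℝ)) =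
      Complex.ofReal (1 / Real.pi) * (Complex.ofReal (c * (Real.sin (2 * Real.pi * γ * (k : ℝ)) /
        (k : ℝ))) * ee (t * (k : ℝ) ^ n + x * (k : ℝ))) +
      1 / (2 * Real.pi * Complex.I) * ((((1 - c) / (k : ℝ) : ℝ) : ℂ) * aa n t (x + γ) k -
        (((1 - c) / (k : ℝ) : ℝ) : ℂ) * aa n t (x - γ) k) := by
  have e1 : aa n t (x + γ) k = ee (t * (k : ℝ) ^ n + x * (k : ℝ)) * ee (γ * k) := by
    unfold aa; rw [← ee_add]; congr 1; ring
  have e2 : aa n t (x - γ) k = ee (t * (k : ℝ) ^ n + x * (k : ℝ)) * ee (-(γ * k)) := by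
    unfold aa; rw [← ee_add]; congr 1; ring
  rw [e1, e2]
  simp only [Complex.ofReal_mul, Complex.ofReal_div, Complex.ofReal_sub, Complex.ofReal_one]
  have e4 : ee (γ * k) - ee (-(γ * k)) = 2 * Complex.I * ((Real.sin (2 * Real.pi * γ * (k : ℝ)) : ℝ) : ℂ) := by
    have := sin_ee (γ * k)
    rw [← mul_assoc] at this
    rw [this]
    have := Complex.I_ne_zero
    field_simp
  have e5 : ∀ A E : ℂ, A * (E * ee (γ * k)) - A * (E * ee (-(γ * k))) =
      A * E * (ee (γ * k) - ee (-(γ * k))) := by intros; ring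
  rw [e5, e4]
  have hpi : (Real.pi : ℂ) ≠ 0 := by exact_mod_cast Real.pi_ne_zero
  have := Complex.I_ne_zero
  have e6 : (1 : ℂ) / (2 * Real.pi * Complex.I) * (2 * Complex.I) = 1 / Real.pi := by field_simp
  generalize ((Real.sin (2 * Real.pi * γ * (k : ℝ)) : ℝ) : ℂ) = S
  generalize ee (t * (k : ℝ) ^ n + x * (k : ℝ)) = E
  rw [show (1 : ℂ) / (2 * Real.pi * Complex.I) * ((1 - (c : ℂ)) / ((k : ℝ) : ℂ) * E * (2 * Complex.I * S)) =
    (1 : ℂ) / (2 * Real.pi * Complex.I) * (2 * Complex.I) * ((1 - (c : ℂ)) / ((k : ℝ) : ℂ) * E * S) by ring, e6]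
  rw [div_mul_eq_div_div, div_eq_mul_inv S, div_eq_mul_inv (1 : ℂ)]
  ring

lemma U_id (n : ℕ) (γ t x α : ℝ) (φ : ℝ → ℝ) (hφ : ∀ x : ℝ, 2 ≤ |x| → φ x = 0) (K : ℕ)
    (hK : 2 ≤ (K : ℝ) * t ^ α) (hd : 0 < t ^ α) :
    Upartial n γ t x K = Ustar n γ φ α t x + 1 / (2 * Real.pi * Complex.I) *
      (∑ k ∈ Finset.Icc (-(K : ℤ)) K,
        (((1 - φ ((k : ℝ) * t ^ α)) / (k : ℝ) : ℝ) : ℂ) * aa n t (x + γ) k -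
      ∑ k ∈ Finset.Icc (-(K : ℤ)) K,
        (((1 - φ ((k : ℝ) * t ^ α)) / (k : ℝ) : ℝ) : ℂ) * aa n t (x - γ) k) := by
  unfold Upartial Ustar
  rw [tsum_eq_sum (s := Finset.Icc (-(K : ℤ)) K), Finset.sum_filter_of_ne, add_assoc]
  · congr 1
    rw [← Finset.sum_sub_distrib, Finset.mul_sum, Finset.mul_sum, ← Finset.sum_add_distrib]
    exact Finset.sum_congr rfl fun k _ => term_id n γ t x _ k
  · intro k _ hk h0
    apply hk
    rw [h0]; simp
  · intro k hk
    have hk' : (K : ℝ) ≤ |(k : ℝ)| := by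
      rw [Finset.mem_Icc] at hk
      have : (K : ℤ) ≤ |k| := by
        by_contra h
        push Not at h
        exact hk ⟨(abs_lt.mp h).1.le, (abs_lt.mp h).2.le⟩
      exact_mod_cast this
    rw [hφ _ (by rw [abs_mul, abs_of_pos hd]; nlinarith)]
    simp

/-- with `N = 2^{n−1}` there are `C > 0` and `q₀` such that for every reduced
fraction `t = u/q` with `q ≥ q₀` and `0 < t ≤ 1`, and every real `x`, `U(t,x)` exists and
`|U(t,x) − U*(t,x)| ≤ C·t^{αn/N}·q^{1/N + ε}`. -/
theorem stmt17 (n : ℕ) (hn : 2 ≤ n) (Δ : ℝ) (hΔ0 : 0 < Δ) (hΔ1 : Δ < 1)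
    (hΔ2 : n = 2 → Δ < 1 / 2) (γ : ℝ) (hγ : γ ∈ Set.Ioo (0 : ℝ) (1 / 2))
    (α : ℝ) (hα1 : ((n : ℝ) - Δ)⁻¹ < α) (hα2 : α < ((n : ℝ) - 1)⁻¹)
    (ε : ℝ) (hε : 0 < ε) (φ : ℝ → ℝ) (hφ : GoodPhi φ) :
    ∃ C > (0 : ℝ), ∃ q₀ : ℤ, ∀ u q : ℤ, 1 ≤ q → q₀ ≤ q → Int.gcd u q = 1 →
      0 < (u : ℝ) / (q : ℝ) → (u : ℝ) / (q : ℝ) ≤ 1 → ∀ x : ℝ,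
      ∃ L : ℂ, Tendsto (fun K : ℕ => Upartial n γ ((u : ℝ) / (q : ℝ)) x K) atTop (nhds L) ∧
        ‖L - Ustar n γ φ α ((u : ℝ) / (q : ℝ)) x‖ ≤
          C * ((u : ℝ) / (q : ℝ)) ^ (α * n / 2 ^ (n - 1)) *
            (q : ℝ) ^ (1 / 2 ^ (n - 1) + ε) := by
  obtain ⟨j, rfl⟩ : ∃ j, n = j + 2 := ⟨n - 2, by omega⟩
  have hj : (0 : ℝ) ≤ j := by positivity
  have hnj : (((j + 2 : ℕ) : ℝ)) = (j : ℝ) + 2 := by push_cast; ring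
  rw [hnj] at hα1 hα2
  have hα0 : 0 < α := lt_trans (inv_pos.mpr (by linarith)) hα1
  have hα3 : α * ((j : ℝ) + 1) < 1 := by
    rw [show (j : ℝ) + 2 - 1 = j + 1 by ring] at hα2
    rwa [← one_div, lt_div_iff₀ (by positivity)] at hα2
  obtain ⟨C, hC, hE⟩ := E_main j α hα0 hα3 ε hε φ hφ
  refine ⟨2 * C, by positivity, 2, ?_⟩
  intro u q _ hq2 hu ht0 ht1 x
  obtain ⟨q, rfl⟩ : ∃ m : ℕ, q = m := ⟨q.toNat, by omega⟩
  have hq2' : 2 ≤ q := by exact_mod_cast hq2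
  have hq1 : (2 : ℝ) ≤ q := by exact_mod_cast hq2'
  rw [Int.cast_natCast] at *
  have hu1 : (1 : ℝ) ≤ u := by
    have h1 : (0 : ℝ) < u := by
      by_contra h
      push Not at h
      exact absurd ht0 (not_lt.mpr (div_nonpos_of_nonpos_of_nonneg h (by positivity)))
    have h2 : (0 : ℤ) < u := by exact_mod_cast h1
    exact_mod_cast h2
  have htq : 1 / (q : ℝ) ≤ (u : ℝ) / q := by gcongr
  obtain ⟨L1, hL1, hb1⟩ := hE u q hq2' hu htq ht1 (x + γ)
  obtain ⟨L2, hL2, hb2⟩ := hE u q hq2' hu htq ht1 (x - γ)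
  obtain ⟨-, -, h3⟩ := R_facts j α hα0 hα3 q (by omega) _ htq ht1
  set t : ℝ := (u : ℝ) / q with ht
  have hd : 0 < t ^ α := by positivity
  refine ⟨Ustar (j + 2) γ φ α t x + 1 / (2 * Real.pi * Complex.I) * (L1 - L2), ?_, ?_⟩
  · refine (((hL1.sub hL2).const_mul (1 / (2 * Real.pi * Complex.I))).const_add
      (Ustar (j + 2) γ φ α t x)).congr' ?_
    filter_upwards [eventually_ge_atTop (q ^ 2)] with K hK
    refine (U_id (j + 2) γ t x α φ hφ.2.2.1 K ?_ hd).symm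
    have h4 : 1 ≤ (q : ℝ) * t ^ α := by rwa [← div_le_iff₀' (by positivity)]
    have h5 : (q : ℝ) ^ 2 ≤ K := by exact_mod_cast hK
    nlinarith
  · rw [add_sub_cancel_left, norm_mul]
    have hpi : ‖(1 : ℂ) / (2 * Real.pi * Complex.I)‖ ≤ 1 := by
      rw [norm_div, norm_mul, norm_mul, Complex.norm_I, Complex.norm_real, Real.norm_eq_abs,
        abs_of_pos Real.pi_pos, norm_one, Complex.norm_ofNat,
        div_le_one (by have := Real.pi_pos; linarith)]
      have := Real.pi_gt_three
      simp
      linarith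
    have hP : ((q : ℝ) * t ^ (α * ((j : ℝ) + 2))) ^ ((1 : ℝ) / 2 ^ (j + 1)) * (q : ℝ) ^ ε =
        t ^ (α * ((j + 2 : ℕ) : ℝ) / 2 ^ (j + 2 - 1)) *
          (q : ℝ) ^ ((1 : ℝ) / 2 ^ (j + 2 - 1) + ε) := by
      rw [hnj, show j + 2 - 1 = j + 1 by omega, Real.rpow_add (x := (q : ℝ)) (by linarith),
        Real.mul_rpow (by positivity) (by positivity), ← Real.rpow_mul ht0.le, mul_one_div]
      ring
    calc _ ≤ 1 * (‖L1‖ + ‖L2‖) := by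
          gcongr
          exact norm_sub_le _ _
      _ ≤ 2 * C * (((q : ℝ) * t ^ (α * ((j : ℝ) + 2))) ^ ((1 : ℝ) / 2 ^ (j + 1)) * (q : ℝ) ^ ε) := by
          linarith
      _ = _ := by rw [hP]; ring
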